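/- Let p ∈ (0,1). There exist constants δ_p, c_p > 0 depending only on p such that for every n ≥ 3 and every α ∈ ℝ^d with entries in [0,1], at least one entry equal to 1, and ‖α‖₂² > c_p, the expected signed triangle count of G(n,p,α) satisfies E[τ(G(n,p,α))] ≥ δ_p · C(n,3) · (‖α‖₃/‖α‖₂)³, where C(n,3) is the binomial coefficient and τ(G) = ∑_{{i,j,k}} (A_{ij}−p)(A_{ik}−p)(A_{jk}−p) (sum over 3-element subsets of {1,…,n}). -/

import Mathlib

open MeasureTheory ProbabilityTheory Real Filter
open scoped Classical ENNReal NNReal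

noncomputable section

/-- Euclidean inner product on `Fin d → ℝ`. -/
def dotp {d : ℕ} (x y : Fin d → ℝ) : ℝ := ∑ i, x i * y i

/-- The `q`-norm of a vector `α ∈ ℝ^d`. -/
def nrm {d : ℕ} (q : ℕ) (α : Fin d → ℝ) : ℝ := (∑ i, α i ^ q) ^ ((1 : ℝ) / q)

/-- The centered Gaussian measure `N(0, D_α)` on `ℝ^d`, `D_α = diag α`. -/
def gaussPi (d : ℕ) (α : Fin d → ℝ) : Measure (Fin d → ℝ) :=
  Measure.pi fun i => gaussianReal 0 (Real.toNNReal (α i))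

/-- The law of `n` i.i.d. samples from `N(0, D_α)`. -/
def sampleMeasure (n d : ℕ) (α : Fin d → ℝ) : Measure (Fin n → Fin d → ℝ) :=
  Measure.pi fun _ => gaussPi d α

/-- `t` is the `p`-th upper quantile of `⟨X₁, X₂⟩` for `X₁, X₂` i.i.d. `N(0, D_α)`. -/
def IsThreshold (d : ℕ) (α : Fin d → ℝ) (p t : ℝ) : Prop :=
  ((gaussPi d α).prod (gaussPi d α)) {xy | t ≤ dotp xy.1 xy.2} = ENNReal.ofReal p

instance (n : ℕ) : MeasurableSpace (SimpleGraph (Fin n)) := ⊤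

/-- The anisotropic random geometric graph `G(n, p, α)`, with threshold `t = t_{p,α}`. -/
def geomGraph (n d : ℕ) (α : Fin d → ℝ) (t : ℝ) : Measure (SimpleGraph (Fin n)) :=
  Measure.map (fun X => SimpleGraph.fromRel fun i j => t ≤ dotp (X i) (X j))
    (sampleMeasure n d α)

/-- The Erdős–Rényi random graph `G(n, p)`. -/
def erGraph (n : ℕ) (p : ℝ) : Measure (SimpleGraph (Fin n)) :=
  Measure.map (fun x => SimpleGraph.fromRel fun i j => x s(i, j) ≤ p)
    (Measure.pi fun _ : Sym2 (Fin n) => volume.restrict (Set.Icc (0 : ℝ) 1))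

/-- Total variation distance between two measures. -/
def tvDist {Ω : Type*} [MeasurableSpace Ω] (μ ν : Measure Ω) : ℝ :=
  ⨆ s : {s : Set Ω // MeasurableSet s}, |(μ s.1).toReal - (ν s.1).toReal|

/-- The edge indicator `A_{ij}` of `G(n,p,α)` as a function of the sample points. -/
def edgeInd {n d : ℕ} (t : ℝ) (X : Fin n → Fin d → ℝ) (i j : Fin n) : ℝ :=
  if t ≤ dotp (X i) (X j) then 1 else 0

/-- The signed triangle count `τ(G(n,p,α))`, written as `1/6` times the sum over
ordered triples of pairwise distinct vertices. -/
def tauCount {n d : ℕ} (p t : ℝ) (X : Fin n → Fin d → ℝ) : ℝ :=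
  (1 / 6) * ∑ i, ∑ j, ∑ k,
    if i ≠ j ∧ i ≠ k ∧ j ≠ k then
      (edgeInd t X i j - p) * (edgeInd t X i k - p) * (edgeInd t X j k - p)
    else 0

abbrev stdG : Measure ℝ := gaussianReal 0 1

instance gaussPi_prob (d : ℕ) (α : Fin d → ℝ) : IsProbabilityMeasure (gaussPi d α) := by
  unfold gaussPi; infer_instance

lemma cf_dotp {d : ℕ} (α : Fin d → ℝ) (hα : ∀ i, 0 ≤ α i) (a : Fin d → ℝ) :
    ∫ x, Complex.exp ((dotp x a : ℝ) * Complex.I) ∂(gaussPi d α)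
      = Complex.exp (-((∑ i, α i * a i ^ 2 : ℝ) : ℂ) / 2) := by
  have h1 : ∀ x : Fin d → ℝ, Complex.exp ((dotp x a : ℝ) * Complex.I)
      = ∏ i, Complex.exp ((a i : ℂ) * (x i : ℂ) * Complex.I) := by
    intro x
    rw [← Complex.exp_sum, dotp]
    congr 1
    push_cast
    rw [Finset.sum_mul]
    exact Finset.sum_congr rfl fun i _ => by ring
  simp_rw [h1, gaussPi]
  rw [integral_fintype_prod_eq_prod (𝕜 := ℂ)
    (f := fun i (x : ℝ) => Complex.exp ((a i : ℂ) * (x : ℂ) * Complex.I))]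
  simp_rw [← charFun_apply_real, charFun_gaussianReal]
  rw [← Complex.exp_sum]
  congr 1
  push_cast
  rw [neg_div, Finset.sum_div, ← Finset.sum_neg_distrib]
  refine Finset.sum_congr rfl fun i _ => ?_
  rw [Real.coe_toNNReal _ (hα i)]
  simp

lemma cf_std (r : ℝ) : ∫ x, Complex.exp ((r : ℂ) * (x : ℂ) * Complex.I) ∂stdG
    = Complex.exp (-((r ^ 2 : ℝ) : ℂ) / 2) := by
  rw [← charFun_apply_real, charFun_gaussianReal]
  congr 1
  push_cast
  simp; ring

lemma joint_law {d : ℕ} (α : Fin d → ℝ) (hα : ∀ i, 0 ≤ α i) (y z : Fin d → ℝ)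
    (a b c w : ℝ) (ha : a = ∑ i, α i * y i ^ 2) (hb : b = ∑ i, α i * z i ^ 2)
    (hc : c = ∑ i, α i * (y i * z i)) (hw : w = b - c ^ 2 / a) (ha0 : 0 < a) (hw0 : 0 ≤ w) :
    (gaussPi d α).map (fun x => (dotp x y, dotp x z))
      = (stdG.prod stdG).map (fun q => (√a * q.1, c / √a * q.1 + √w * q.2)) := by
  have m1 : Measurable (fun x : Fin d → ℝ => (dotp x y, dotp x z)) := by
    unfold dotp; fun_prop
  have m2 : Measurable (fun q : ℝ × ℝ => (√a * q.1, c / √a * q.1 + √w * q.2)) := by fun_prop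
  have : IsProbabilityMeasure ((gaussPi d α).map (fun x => (dotp x y, dotp x z))) :=
    Measure.isProbabilityMeasure_map m1.aemeasurable
  have : IsProbabilityMeasure ((stdG.prod stdG).map
      (fun q : ℝ × ℝ => (√a * q.1, c / √a * q.1 + √w * q.2))) :=
    Measure.isProbabilityMeasure_map m2.aemeasurable
  refine Measure.ext_of_charFunDual ?_
  ext L
  have hL : ∀ u v : ℝ, L (u, v) = u * L (1, 0) + v * L (0, 1) := by
    intro u v
    have : ((u, v) : ℝ × ℝ) = u • ((1 : ℝ), (0 : ℝ)) + v • ((0 : ℝ), (1 : ℝ)) := by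
      simp
    rw [this, map_add, map_smul, map_smul]; simp
  set l := L (1, 0)
  set m := L (0, 1)
  rw [charFunDual_apply, charFunDual_apply, integral_map m1.aemeasurable (by fun_prop),
    integral_map m2.aemeasurable (by fun_prop)]
  have e1 : ∀ x : Fin d → ℝ, L (dotp x y, dotp x z) = dotp x (fun i => l * y i + m * z i) := by
    intro x
    rw [hL]; unfold dotp
    rw [Finset.sum_mul, Finset.sum_mul, ← Finset.sum_add_distrib]
    exact Finset.sum_congr rfl fun i _ => by ring
  simp_rw [e1]
  rw [cf_dotp α hα]
  have e2 : ∀ q : ℝ × ℝ, Complex.exp ((L (√a * q.1, c / √a * q.1 + √w * q.2) : ℝ) * Complex.I)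
      = Complex.exp (((l * √a + m * c / √a : ℝ) : ℂ) * (q.1 : ℂ) * Complex.I)
        * Complex.exp (((m * √w : ℝ) : ℂ) * (q.2 : ℂ) * Complex.I) := by
    intro q
    rw [hL, ← Complex.exp_add]
    congr 1
    push_cast
    ring
  simp_rw [e2]
  rw [integral_prod_mul (fun x : ℝ => Complex.exp (((l * √a + m * c / √a : ℝ) : ℂ) * (x : ℂ) * Complex.I))
    (fun x : ℝ => Complex.exp (((m * √w : ℝ) : ℂ) * (x : ℂ) * Complex.I)), cf_std, cf_std, ← Complex.exp_add]
  congr 1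
  rw [← add_div]
  congr 1
  have h2 : ∑ i, α i * (l * y i + m * z i) ^ 2 = l ^ 2 * a + 2 * l * m * c + m ^ 2 * b := by
    rw [ha, hb, hc, Finset.mul_sum, Finset.mul_sum, Finset.mul_sum, ← Finset.sum_add_distrib,
      ← Finset.sum_add_distrib]
    exact Finset.sum_congr rfl fun i _ => by ring
  have h3 : (l * √a + m * c / √a) ^ 2 + (m * √w) ^ 2 = l ^ 2 * a + 2 * l * m * c + m ^ 2 * b := by
    have hs : √a ≠ 0 := (Real.sqrt_pos.2 ha0).ne'
    have hs2 : √a ^ 2 = a := Real.sq_sqrt ha0.le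
    have : (l * √a + m * c / √a) ^ 2 = l ^ 2 * a + 2 * l * m * c + m ^ 2 * c ^ 2 / a := by
      rw [← hs2]; field_simp; simp only [hs2]; ring
    rw [this, mul_pow, Real.sq_sqrt hw0, hw]; ring
  rw [h2, ← h3]
  push_cast; ring

lemma joint_int {d : ℕ} (α : Fin d → ℝ) (hα : ∀ i, 0 ≤ α i) (y z : Fin d → ℝ)
    (a b c w : ℝ) (ha : a = ∑ i, α i * y i ^ 2) (hb : b = ∑ i, α i * z i ^ 2)
    (hc : c = ∑ i, α i * (y i * z i)) (hw : w = b - c ^ 2 / a) (ha0 : 0 < a) (hw0 : 0 ≤ w)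
    (F : ℝ × ℝ → ℝ) (hF : Measurable F) :
    ∫ x, F (dotp x y, dotp x z) ∂(gaussPi d α)
      = ∫ q, F (√a * q.1, c / √a * q.1 + √w * q.2) ∂(stdG.prod stdG) := by
  have m1 : Measurable (fun x : Fin d → ℝ => (dotp x y, dotp x z)) := by
    unfold dotp; fun_prop
  have m2 : Measurable (fun q : ℝ × ℝ => (√a * q.1, c / √a * q.1 + √w * q.2)) := by fun_prop
  rw [← integral_map m1.aemeasurable hF.aestronglyMeasurable,
    joint_law α hα y z a b c w ha hb hc hw ha0 hw0,
    integral_map m2.aemeasurable hF.aestronglyMeasurable]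

lemma schur_nonneg {d : ℕ} (α : Fin d → ℝ) (hα : ∀ i, 0 ≤ α i) (y z : Fin d → ℝ)
    (a b c : ℝ) (ha : a = ∑ i, α i * y i ^ 2) (hb : b = ∑ i, α i * z i ^ 2)
    (hc : c = ∑ i, α i * (y i * z i)) (ha0 : 0 < a) : 0 ≤ b - c ^ 2 / a := by
  have : c ^ 2 ≤ a * b := by
    rw [ha, hb, hc]
    refine Finset.sum_sq_le_sum_mul_sum_of_sq_le_mul _ (fun i _ => mul_nonneg (hα i) (sq_nonneg _))
      (fun i _ => mul_nonneg (hα i) (sq_nonneg _)) (fun i _ => le_of_eq (by ring))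
  rw [sub_nonneg, div_le_iff₀ ha0]; linarith


/-- standard Gaussian density -/
def ph (x : ℝ) : ℝ := gaussianPDFReal 0 1 x

/-- standard Gaussian upper tail -/
def Qf (u : ℝ) : ℝ := stdG.real (Set.Ici u)

lemma ph_eq (x : ℝ) : ph x = (√(2 * π))⁻¹ * rexp (-x ^ 2 / 2) := by
  simp [ph, gaussianPDFReal]

lemma ph_pos (x : ℝ) : 0 < ph x := gaussianPDFReal_pos 0 1 x one_ne_zero

lemma ph_const : 0 < (√(2 * π))⁻¹ ∧ (√(2 * π))⁻¹ ≤ 1 := by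
  have h : 1 ≤ √(2 * π) := by
    rw [Real.one_le_sqrt]; linarith [Real.pi_gt_three]
  exact ⟨by positivity, inv_le_one_of_one_le₀ h⟩

lemma ph_le_one (x : ℝ) : ph x ≤ 1 := by
  rw [ph_eq]
  have h1 := ph_const
  have h2 : rexp (-x ^ 2 / 2) ≤ 1 := Real.exp_le_one_iff.2 (by nlinarith [sq_nonneg x])
  nlinarith [Real.exp_pos (-x ^ 2 / 2)]

lemma ph_mono {x K : ℝ} (h : |x| ≤ K) : ph K ≤ ph x := by
  rw [ph_eq, ph_eq]
  refine mul_le_mul_of_nonneg_left (Real.exp_le_exp.2 ?_) ph_const.1.le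
  have : x ^ 2 ≤ K ^ 2 := sq_le_sq' (by linarith [abs_le.1 h]) (abs_le.1 h).2
  linarith

lemma ph_deriv (x : ℝ) : HasDerivAt ph (-(x * ph x)) x := by
  have h : ph = fun x => (√(2 * π))⁻¹ * rexp (-x ^ 2 / 2) := funext ph_eq
  have h2 : HasDerivAt (fun x : ℝ => -x ^ 2 / 2) (-x) x := by
    have := ((hasDerivAt_pow 2 x).fun_neg).div_const 2
    exact this.congr_deriv (by simp; ring)
  have h3 := (h2.exp).const_mul ((√(2 * π))⁻¹)
  rw [ph_eq, h]
  exact h3.congr_deriv (by ring)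

lemma ph_cont : Continuous ph := continuous_iff_continuousAt.2 fun x => (ph_deriv x).continuousAt

lemma x_ph_le (x : ℝ) : |x * ph x| ≤ 1 := by
  rw [abs_mul, abs_of_pos (ph_pos x), ph_eq]
  have h1 := ph_const
  have h2 : |x| ≤ rexp (x ^ 2 / 2) := by
    have := Real.add_one_le_exp (x ^ 2 / 2)
    nlinarith [sq_nonneg (|x| - 1), sq_abs x]
  have h3 : |x| * rexp (-x ^ 2 / 2) ≤ 1 := by
    rw [neg_div, Real.exp_neg, ← div_eq_mul_inv, div_le_one (Real.exp_pos _)]; exact h2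
  have h4 : 0 ≤ |x| * rexp (-x ^ 2 / 2) := by positivity
  nlinarith

lemma ph_lip (u v : ℝ) : |ph u - ph v| ≤ |u - v| := by
  have := Convex.norm_image_sub_le_of_norm_hasDerivWithin_le (f := ph) (C := 1) (s := Set.univ)
    (fun x _ => (ph_deriv x).hasDerivWithinAt) (fun x _ => by
      rw [norm_neg, Real.norm_eq_abs]; exact x_ph_le x) convex_univ (Set.mem_univ v) (Set.mem_univ u)
  simpa [Real.norm_eq_abs] using this

lemma ph_int : Integrable ph := integrable_gaussianPDFReal 0 1

lemma Qf_eq (u : ℝ) : Qf u = ∫ x in Set.Ioi u, ph x := by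
  rw [Qf, Measure.real, gaussianReal_apply_eq_integral 0 one_ne_zero, ENNReal.toReal_ofReal]
  · exact integral_Ici_eq_integral_Ioi
  · exact integral_nonneg fun x => gaussianPDFReal_nonneg 0 1 x

lemma Qf_sub (u v : ℝ) : Qf u - Qf v = ∫ x in u..v, ph x := by
  rw [Qf_eq, Qf_eq, intervalIntegral.integral_Ioi_sub_Ioi' ph_int.integrableOn ph_int.integrableOn]

lemma Qf_bd (u : ℝ) : 0 ≤ Qf u ∧ Qf u ≤ 1 := ⟨measureReal_nonneg, measureReal_le_one⟩

lemma Qf_lip (u v : ℝ) : |Qf u - Qf v| ≤ |u - v| := by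
  rw [Qf_sub]
  have := intervalIntegral.norm_integral_le_of_norm_le_const (a := u) (b := v) (f := ph) (C := 1)
    (fun x _ => by rw [Real.norm_eq_abs, abs_of_pos (ph_pos x)]; exact ph_le_one x)
  rw [Real.norm_eq_abs, one_mul, abs_sub_comm v u] at this
  exact this

lemma Qf_taylor (u v : ℝ) : |Qf u - Qf v + ph v * (u - v)| ≤ (u - v) ^ 2 := by
  rw [Qf_sub]
  have e : (∫ x in u..v, ph x) + ph v * (u - v) = ∫ x in u..v, (ph x - ph v) := by
    rw [intervalIntegral.integral_sub (ph_cont.intervalIntegrable _ _) (by simp)]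
    simp; ring
  rw [e]
  have := intervalIntegral.norm_integral_le_of_norm_le_const (a := u) (b := v)
    (f := fun x => ph x - ph v) (C := |u - v|)
    (fun x hx => by
      rw [Real.norm_eq_abs]
      refine (ph_lip x v).trans ?_
      rw [abs_sub_comm x v, abs_sub_comm u v]
      have hx' := Set.uIoc_subset_uIcc hx
      exact Set.abs_sub_right_of_mem_uIcc hx')
  rw [Real.norm_eq_abs, abs_sub_comm v u, ← sq, sq_abs] at this
  exact this

lemma ind_meas (u : ℝ) : Measurable (fun x : ℝ => if u ≤ x then (1 : ℝ) else 0) :=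
  Measurable.ite measurableSet_Ici measurable_const measurable_const

lemma int_ind (u : ℝ) : ∫ x, (if u ≤ x then (1 : ℝ) else 0) ∂stdG = Qf u := by
  have : (fun x : ℝ => if u ≤ x then (1 : ℝ) else 0) = (Set.Ici u).indicator 1 := by
    ext x; simp [Set.indicator, Set.mem_Ici]
  rw [this, integral_indicator_one measurableSet_Ici, Qf]

lemma std_int_pow (k : ℕ) : Integrable (fun x : ℝ => x ^ k) stdG := by
  have := (memLp_id_gaussianReal (μ := 0) (v := 1) (k : ℝ≥0)).integrable_norm_pow' (p := k)
  refine (this.mono' (by fun_prop) (ae_of_all _ fun x => ?_))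
  simp

lemma std_int_id : Integrable (fun x : ℝ => x) stdG := by simpa using std_int_pow 1

lemma std_mean : ∫ x, x ∂stdG = 0 := integral_id_gaussianReal

lemma std_sq : ∫ x, x ^ 2 ∂stdG = 1 := by
  have h := variance_fun_id_gaussianReal (μ := 0) (v := 1)
  rw [variance_of_integral_eq_zero (by fun_prop) std_mean] at h
  simpa using h

lemma tendsto_ph : Tendsto ph atTop (nhds 0) := by
  have : Tendsto (fun x : ℝ => x⁻¹) atTop (nhds 0) := tendsto_inv_atTop_zero
  refine squeeze_zero' (Eventually.of_forall fun x => (ph_pos x).le) ?_ this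
  filter_upwards [eventually_gt_atTop 0] with x hx
  have := x_ph_le x
  rw [abs_of_pos (mul_pos hx (ph_pos x))] at this
  rw [le_inv_comm₀ (ph_pos x) hx, ← one_div, le_div_iff₀ (ph_pos x)]; exact this

lemma x_ph_int : Integrable (fun x => x * ph x) := by
  have h := std_int_id
  rw [stdG, gaussianReal_of_var_ne_zero 0 one_ne_zero, 
    integrable_withDensity_iff (measurable_gaussianPDF 0 1)
      (ae_of_all _ fun x => gaussianPDF_lt_top)] at h
  simpa [ph] using h

lemma int_ind_x (u : ℝ) : ∫ x, (if u ≤ x then (1 : ℝ) else 0) * x ∂stdG = ph u := by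
  rw [integral_gaussianReal_eq_integral_smul one_ne_zero]
  have e : (fun x : ℝ => gaussianPDFReal 0 1 x • ((if u ≤ x then (1 : ℝ) else 0) * x))
      = (Set.Ici u).indicator (fun x => x * ph x) := by
    ext x
    by_cases h : u ≤ x
    · simp [Set.indicator, Set.mem_Ici, h, ph, mul_comm]
    · simp [Set.indicator, Set.mem_Ici, h]
  rw [e, integral_indicator measurableSet_Ici, integral_Ici_eq_integral_Ioi]
  have := integral_Ioi_of_hasDerivAt_of_tendsto' (a := u) (f := fun x => - ph x)
    (f' := fun x => x * ph x) (m := 0)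
    (fun x _ => (ph_deriv x).fun_neg.congr_deriv (neg_neg _)) x_ph_int.integrableOn
    (by simpa using tendsto_ph.neg)
  rw [this]; ring


lemma inv_sqrt_sub_one {a : ℝ} (ha : 1 / 2 ≤ a) : |(√a)⁻¹ - 1| ≤ |a - 1| := by
  have h0 : 0 < √a := Real.sqrt_pos.2 (by linarith)
  have h1 : √a ^ 2 = a := Real.sq_sqrt (by linarith)
  have h2 : 1 / 2 ≤ √a := by
    by_contra h
    push Not at h
    nlinarith
  have e : (√a)⁻¹ - 1 = (1 - a) * (√a * (1 + √a))⁻¹ := by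
    field_simp; linarith
  rw [e, abs_mul, abs_sub_comm, abs_of_pos (by positivity : 0 < (√a * (1 + √a))⁻¹)]
  refine mul_le_of_le_one_right (abs_nonneg _) (inv_le_one_of_one_le₀ ?_)
  nlinarith

lemma stepA (v a c w p : ℝ) (ha : 0 < a) (hw : 0 < w) :
    ∫ q, ((if v ≤ √a * q.1 then (1 : ℝ) else 0) - p)
        * ((if v ≤ c / √a * q.1 + √w * q.2 then (1 : ℝ) else 0) - p) ∂(stdG.prod stdG)
      = ∫ x, ((if v * (√a)⁻¹ ≤ x then (1 : ℝ) else 0) - p)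
        * (Qf (v * (√w)⁻¹ - c * (√a)⁻¹ * (√w)⁻¹ * x) - p) ∂stdG := by
  have hsa : 0 < √a := Real.sqrt_pos.2 ha
  have hsw : 0 < √w := Real.sqrt_pos.2 hw
  have hm : Measurable (fun q : ℝ × ℝ => ((if v ≤ √a * q.1 then (1 : ℝ) else 0) - p)
        * ((if v ≤ c / √a * q.1 + √w * q.2 then (1 : ℝ) else 0) - p)) := by
    refine Measurable.mul (Measurable.sub (Measurable.ite ?_ measurable_const measurable_const)
      measurable_const) (Measurable.sub (Measurable.ite ?_ measurable_const measurable_const)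
      measurable_const)
    · exact measurableSet_le measurable_const (by fun_prop)
    · exact measurableSet_le measurable_const (by fun_prop)
  have hi : Integrable (fun q : ℝ × ℝ => ((if v ≤ √a * q.1 then (1 : ℝ) else 0) - p)
        * ((if v ≤ c / √a * q.1 + √w * q.2 then (1 : ℝ) else 0) - p)) (stdG.prod stdG) := by
    refine Integrable.of_bound hm.aestronglyMeasurable ((1 + |p|) * (1 + |p|)) (ae_of_all _ fun q => ?_)
    rw [norm_mul]
    have hh : ∀ P : Prop, ‖(if P then (1 : ℝ) else 0) - p‖ ≤ 1 + |p| := by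
      intro P
      refine (norm_sub_le _ _).trans ?_
      split_ifs <;> simp
    exact mul_le_mul (hh _) (hh _) (norm_nonneg _) (by positivity)
  rw [integral_prod _ hi]
  refine integral_congr_ae (ae_of_all _ fun x => ?_)
  change ∫ y, ((if v ≤ √a * x then (1 : ℝ) else 0) - p)
        * ((if v ≤ c / √a * x + √w * y then (1 : ℝ) else 0) - p) ∂stdG = _
  rw [integral_const_mul, integral_sub]
  · have e1 : (v ≤ √a * x) = (v * (√a)⁻¹ ≤ x) := by
      rw [← div_eq_mul_inv, div_le_iff₀ hsa, mul_comm]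
    have e2 : ∀ y : ℝ, (v ≤ c / √a * x + √w * y) =
        (v * (√w)⁻¹ - c * (√a)⁻¹ * (√w)⁻¹ * x ≤ y) := by
      intro y
      have : v * (√w)⁻¹ - c * (√a)⁻¹ * (√w)⁻¹ * x = (v - c / √a * x) / √w := by
        field_simp
      rw [this, div_le_iff₀ hsw, sub_le_iff_le_add, mul_comm y, add_comm]
    simp_rw [e1, e2]
    rw [int_ind]
    simp
  · refine Integrable.of_bound (C := 1) ?_ (ae_of_all _ fun q => ?_)
    · refine (Measurable.ite ?_ measurable_const measurable_const).aestronglyMeasurable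
      exact measurableSet_le measurable_const (by fun_prop)
    · split_ifs <;> simp
  · exact integrable_const _

lemma Qf_cont : Continuous Qf := by
  have : LipschitzWith 1 Qf := LipschitzWith.of_dist_le_mul fun u v => by
    simpa [Real.dist_eq] using Qf_lip u v
  exact this.continuous

lemma ind_int (u : ℝ) : Integrable (fun x : ℝ => if u ≤ x then (1 : ℝ) else 0) stdG := by
  refine Integrable.of_bound (C := 1) (ind_meas u).aestronglyMeasurable (ae_of_all _ fun q => ?_)
  split_ifs <;> simp

lemma ind_x_int (u : ℝ) : Integrable (fun x : ℝ => (if u ≤ x then (1 : ℝ) else 0) * x) stdG := by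
  refine std_int_id.mono ((ind_meas u).mul measurable_id).aestronglyMeasurable (ae_of_all _ fun q => ?_)
  split_ifs <;> simp

lemma stepB (v u m κ p : ℝ) (hp0 : 0 ≤ p) (hp1 : p ≤ 1) :
    |(∫ x, ((if u ≤ x then (1 : ℝ) else 0) - p) * (Qf (m - κ * x) - p) ∂stdG)
      - ((Qf v - p - ph v * (m - v)) * (Qf u - p) + ph v * κ * ph u)|
      ≤ 2 * (m - v) ^ 2 + 2 * κ ^ 2 := by
  have hb : ∀ x : ℝ, |(if u ≤ x then (1 : ℝ) else 0) - p| ≤ 1 := by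
    intro x
    rw [abs_le]
    split_ifs <;> constructor <;> linarith
  have hmi : Measurable (fun x : ℝ => (if u ≤ x then (1 : ℝ) else 0) - p) :=
    (ind_meas u).sub measurable_const
  have i1 : Integrable (fun x : ℝ => ((if u ≤ x then (1 : ℝ) else 0) - p) * (Qf (m - κ * x) - p))
      stdG := by
    refine Integrable.of_bound (C := 1) ?_ (ae_of_all _ fun x => ?_)
    · refine (hmi.mul ?_).aestronglyMeasurable
      have := Qf_cont
      exact Continuous.measurable (by fun_prop)
    · rw [norm_mul, Real.norm_eq_abs, Real.norm_eq_abs]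
      have h2 : |Qf (m - κ * x) - p| ≤ 1 := by
        have := Qf_bd (m - κ * x)
        rw [abs_le]; constructor <;> linarith
      nlinarith [hb x, abs_nonneg ((if u ≤ x then (1 : ℝ) else 0) - p), abs_nonneg (Qf (m - κ * x) - p)]
  have i2a : Integrable (fun x : ℝ => ((if u ≤ x then (1 : ℝ) else 0) - p)) stdG :=
    (ind_int u).sub (integrable_const _)
  have i2b : Integrable (fun x : ℝ => ((if u ≤ x then (1 : ℝ) else 0) * x - p * x)) stdG :=
    (ind_x_int u).sub (std_int_id.const_mul p)
  have e2 : ∫ x, ((Qf v - p - ph v * (m - v)) * ((if u ≤ x then (1 : ℝ) else 0) - p)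
      + (ph v * κ) * ((if u ≤ x then (1 : ℝ) else 0) * x - p * x)) ∂stdG
      = (Qf v - p - ph v * (m - v)) * (Qf u - p) + ph v * κ * ph u := by
    rw [integral_add (i2a.const_mul _) (i2b.const_mul _), integral_const_mul, integral_const_mul,
      integral_sub (ind_int u) (integrable_const _), integral_sub (ind_x_int u)
      (std_int_id.const_mul p), int_ind, int_ind_x, integral_const_mul, std_mean]
    simp
  have i2 : Integrable (fun x : ℝ => (Qf v - p - ph v * (m - v)) * ((if u ≤ x then (1 : ℝ) else 0) - p)
      + (ph v * κ) * ((if u ≤ x then (1 : ℝ) else 0) * x - p * x)) stdG :=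
    (i2a.const_mul _).add (i2b.const_mul _)
  rw [← e2, ← integral_sub i1 i2]
  have i3 : Integrable (fun x : ℝ => 2 * (m - v) ^ 2 + 2 * κ ^ 2 * x ^ 2) stdG :=
    (integrable_const _).add ((std_int_pow 2).const_mul _)
  have e3 : ∫ x, (2 * (m - v) ^ 2 + 2 * κ ^ 2 * x ^ 2) ∂stdG = 2 * (m - v) ^ 2 + 2 * κ ^ 2 := by
    rw [integral_add (integrable_const _) ((std_int_pow 2).const_mul _), integral_const_mul (2 * κ ^ 2), std_sq]
    simp
  rw [← e3, ← Real.norm_eq_abs]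
  refine norm_integral_le_of_norm_le i3 (ae_of_all _ fun x => ?_)
  have e : ((if u ≤ x then (1 : ℝ) else 0) - p) * (Qf (m - κ * x) - p)
      - ((Qf v - p - ph v * (m - v)) * ((if u ≤ x then (1 : ℝ) else 0) - p)
      + (ph v * κ) * ((if u ≤ x then (1 : ℝ) else 0) * x - p * x))
      = ((if u ≤ x then (1 : ℝ) else 0) - p) *
        (Qf (m - κ * x) - Qf v + ph v * (m - κ * x - v)) := by ring
  rw [e, norm_mul, Real.norm_eq_abs, Real.norm_eq_abs]
  have h1 := Qf_taylor (m - κ * x) v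
  have h2 := hb x
  have h3 : (m - κ * x - v) ^ 2 ≤ 2 * (m - v) ^ 2 + 2 * κ ^ 2 * x ^ 2 := by
    nlinarith [sq_nonneg (m - v + κ * x)]
  have h4 := abs_nonneg (Qf (m - κ * x) - Qf v + ph v * (m - κ * x - v))
  nlinarith

lemma algC (K e1 e2 e3 e4 : ℝ) (hK : 1 ≤ K) (h1 : 0 ≤ e1) (h2 : 0 ≤ e2) (h3 : 0 ≤ e3)
    (h4 : 0 ≤ e4) :
    (e4 + K * (e2 + e3)) * (e4 + K * e1) + e3 * (4 / 3 * e1 + (e2 + e3) + K * e1)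
      + 2 * (K * (e2 + e3)) ^ 2 + 6 * e3 ^ 2
      ≤ 100 * K ^ 2 * (e1 ^ 2 + e2 ^ 2 + e3 ^ 2 + e4 ^ 2) := by
  have hK2 : 1 ≤ K ^ 2 := by nlinarith
  have hKK : K ≤ K ^ 2 := by nlinarith
  have a1 : (e4 + K * (e2 + e3)) * (e4 + K * e1) ≤ K ^ 2 * ((e4 + (e2 + e3)) * (e4 + e1)) := by
    have p1 : e4 + K * (e2 + e3) ≤ K * (e4 + (e2 + e3)) := by nlinarith
    have p2 : e4 + K * e1 ≤ K * (e4 + e1) := by nlinarith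
    calc _ ≤ (K * (e4 + (e2 + e3))) * (K * (e4 + e1)) :=
          mul_le_mul p1 p2 (by positivity) (by positivity)
      _ = _ := by ring
  have a2 : e3 * (4 / 3 * e1 + (e2 + e3) + K * e1) ≤ K ^ 2 * (e3 * (4 / 3 * e1 + (e2 + e3) + e1)) := by
    have p : 4 / 3 * e1 + (e2 + e3) + K * e1 ≤ K ^ 2 * (4 / 3 * e1 + (e2 + e3) + e1) := by
      have q1 : K * e1 ≤ K ^ 2 * e1 := mul_le_mul_of_nonneg_right hKK h1
      have q2 : 4 / 3 * e1 + (e2 + e3) ≤ K ^ 2 * (4 / 3 * e1 + (e2 + e3)) :=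
        le_mul_of_one_le_left (by positivity) hK2
      linarith
    calc _ ≤ e3 * (K ^ 2 * (4 / 3 * e1 + (e2 + e3) + e1)) := mul_le_mul_of_nonneg_left p h3
      _ = _ := by ring
  have a3 : 6 * e3 ^ 2 ≤ K ^ 2 * (6 * e3 ^ 2) := le_mul_of_one_le_left (by positivity) hK2
  have a4 : (e4 + (e2 + e3)) * (e4 + e1) + e3 * (4 / 3 * e1 + (e2 + e3) + e1) + 2 * (e2 + e3) ^ 2
      + 6 * e3 ^ 2 ≤ 100 * (e1 ^ 2 + e2 ^ 2 + e3 ^ 2 + e4 ^ 2) := by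
    linarith [sq_nonneg (e1 - e2), sq_nonneg (e1 - e3), sq_nonneg (e1 - e4), sq_nonneg (e2 - e3),
      sq_nonneg (e2 - e4), sq_nonneg (e3 - e4), sq_nonneg e1, sq_nonneg e2, sq_nonneg e3, sq_nonneg e4]
  linarith [mul_le_mul_of_nonneg_left a4 (by positivity : 0 ≤ K ^ 2)]

set_option maxHeartbeats 1000000 in
lemma core_bound (v a b c w p K : ℝ) (hK : 1 ≤ K) (hv : |v| ≤ K) (hp0 : 0 ≤ p) (hp1 : p ≤ 1)
    (ha : |a - 1| ≤ 1 / 4) (hb : |b - 1| ≤ 1 / 4) (hc : |c| ≤ 1 / 4) (hw : w = b - c ^ 2 / a) :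
    |(∫ q, ((if v ≤ √a * q.1 then (1 : ℝ) else 0) - p)
        * ((if v ≤ c / √a * q.1 + √w * q.2 then (1 : ℝ) else 0) - p) ∂(stdG.prod stdG))
      - ph v ^ 2 * c| ≤ 100 * K ^ 2 * ((a - 1) ^ 2 + (b - 1) ^ 2 + c ^ 2 + (Qf v - p) ^ 2) := by
  have ha' := abs_le.1 ha
  have hb' := abs_le.1 hb
  have hc' := abs_le.1 hc
  have ha0 : 0 < a := by linarith
  have hc2 : c ^ 2 = |c| ^ 2 := (sq_abs c).symm
  have hca : c ^ 2 / a ≤ |c| / 3 := by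
    rw [div_le_iff₀ ha0, hc2]
    linarith [mul_nonneg (abs_nonneg c) (by linarith : 0 ≤ a / 3 - |c|)]
  have hca0 : 0 ≤ c ^ 2 / a := by positivity
  have hw1 : |w - 1| ≤ |b - 1| + |c| / 3 := by
    rw [hw]
    calc |b - c ^ 2 / a - 1| = |(b - 1) - c ^ 2 / a| := by ring_nf
      _ ≤ |b - 1| + |c ^ 2 / a| := abs_sub _ _
      _ ≤ _ := by rw [abs_of_nonneg hca0]; linarith
  have hw' := abs_le.1 (hw1.trans (by linarith : |b - 1| + |c| / 3 ≤ 1 / 3))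
  have hw0 : 0 < w := by linarith
  rw [stepA v a c w p ha0 hw0]
  set r := (√a)⁻¹ with hr
  set q := (√w)⁻¹ with hq
  have hr1 : |r - 1| ≤ |a - 1| := inv_sqrt_sub_one (by linarith)
  have hq1 : |q - 1| ≤ |b - 1| + |c| :=
    (inv_sqrt_sub_one (by linarith)).trans (hw1.trans (by linarith [abs_nonneg c]))
  have hq1' : |q - 1| ≤ 1 / 3 :=
    (inv_sqrt_sub_one (by linarith)).trans (hw1.trans (by linarith))
  have hr0 : 0 < r := by rw [hr]; have := Real.sqrt_pos.2 ha0; positivity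
  have hq0 : 0 < q := by rw [hq]; have := Real.sqrt_pos.2 hw0; positivity
  have hr2 : r ≤ 5 / 4 := by linarith [(abs_le.1 (hr1.trans ha)).2]
  have hq2 : q ≤ 4 / 3 := by linarith [(abs_le.1 hq1').2]
  have hB := stepB v (v * r) (v * q) (c * r * q) p hp0 hp1
  set I := ∫ x, ((if v * r ≤ x then (1 : ℝ) else 0) - p) * (Qf (v * q - c * r * q * x) - p) ∂stdG
  set e1 := |a - 1|
  set e2 := |b - 1|
  set e3 := |c|
  set e4 := |Qf v - p| with he4
  have n1 : 0 ≤ e1 := abs_nonneg _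
  have n2 : 0 ≤ e2 := abs_nonneg _
  have n3 : 0 ≤ e3 := abs_nonneg _
  have n4 : 0 ≤ e4 := abs_nonneg _
  have hvr : |v * r - v| ≤ K * e1 := by
    rw [show v * r - v = v * (r - 1) by ring, abs_mul]
    exact mul_le_mul hv hr1 (abs_nonneg _) (by linarith)
  have hvq : |v * q - v| ≤ K * (e2 + e3) := by
    rw [show v * q - v = v * (q - 1) by ring, abs_mul]
    exact mul_le_mul hv hq1 (abs_nonneg _) (by linarith)
  have hphv := ph_pos v
  have hphv1 := ph_le_one v
  have t1 : |(Qf v - p - ph v * (v * q - v)) * (Qf (v * r) - p)|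
      ≤ (e4 + K * (e2 + e3)) * (e4 + K * e1) := by
    rw [abs_mul]
    refine mul_le_mul ?_ ?_ (abs_nonneg _) (by positivity)
    · refine (abs_sub _ _).trans (add_le_add le_rfl ?_)
      rw [abs_mul, abs_of_pos hphv]
      exact (mul_le_of_le_one_left (abs_nonneg _) hphv1).trans hvq
    · calc |Qf (v * r) - p| = |(Qf v - p) + (Qf (v * r) - Qf v)| := by ring_nf
        _ ≤ e4 + |Qf (v * r) - Qf v| := abs_add_le _ _
        _ ≤ _ := by linarith [Qf_lip (v * r) v]
  have t2 : |ph v * (c * r * q) * ph (v * r) - ph v ^ 2 * c|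
      ≤ e3 * (4 / 3 * e1 + (e2 + e3) + K * e1) := by
    have e : ph v * (c * r * q) * ph (v * r) - ph v ^ 2 * c
        = c * (ph v * (((r - 1) * q + (q - 1)) * ph (v * r) + (ph (v * r) - ph v))) := by ring
    rw [e, abs_mul]
    refine mul_le_mul_of_nonneg_left ?_ n3
    rw [abs_mul, abs_of_pos hphv]
    have g1 : |((r - 1) * q + (q - 1)) * ph (v * r) + (ph (v * r) - ph v)|
        ≤ 4 / 3 * e1 + (e2 + e3) + K * e1 := by
      refine (abs_add_le _ _).trans (add_le_add ?_ ((ph_lip _ _).trans hvr))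
      rw [abs_mul, abs_of_pos (ph_pos _)]
      have g2 : |(r - 1) * q + (q - 1)| ≤ 4 / 3 * e1 + (e2 + e3) := by
        refine (abs_add_le _ _).trans (add_le_add ?_ hq1)
        rw [abs_mul, abs_of_pos hq0, mul_comm]
        exact mul_le_mul hq2 hr1 (abs_nonneg _) (by norm_num)
      exact (mul_le_of_le_one_right (abs_nonneg _) (ph_le_one (v * r))).trans g2
    exact (mul_le_of_le_one_left (abs_nonneg _) hphv1).trans g1
  have t3 : 2 * (v * q - v) ^ 2 ≤ 2 * (K * (e2 + e3)) ^ 2 := by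
    have : (v * q - v) ^ 2 ≤ (K * (e2 + e3)) ^ 2 := by
      rw [← sq_abs (v * q - v)]
      exact pow_le_pow_left₀ (abs_nonneg _) hvq 2
    linarith
  have t4 : 2 * (c * r * q) ^ 2 ≤ 6 * e3 ^ 2 := by
    have hrq : r * q ≤ 5 / 4 * (4 / 3) := mul_le_mul hr2 hq2 hq0.le (by norm_num)
    have hrq0 : 0 ≤ r * q := by positivity
    have : (r * q) ^ 2 ≤ 3 := (pow_le_pow_left₀ hrq0 hrq 2).trans (by norm_num)
    rw [show (c * r * q) ^ 2 = c ^ 2 * (r * q) ^ 2 by ring, hc2]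
    linarith [mul_le_mul_of_nonneg_left this (sq_nonneg e3)]
  have hfin := algC K e1 e2 e3 e4 hK n1 n2 n3 n4
  have hs : (a - 1) ^ 2 + (b - 1) ^ 2 + c ^ 2 + (Qf v - p) ^ 2
      = e1 ^ 2 + e2 ^ 2 + e3 ^ 2 + e4 ^ 2 := by
    simp only [e1, e2, e3, e4, sq_abs]
  rw [hs]
  have : I - ph v ^ 2 * c = (I - ((Qf v - p - ph v * (v * q - v)) * (Qf (v * r) - p)
      + ph v * (c * r * q) * ph (v * r)))
      + (Qf v - p - ph v * (v * q - v)) * (Qf (v * r) - p)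
      + (ph v * (c * r * q) * ph (v * r) - ph v ^ 2 * c) := by ring
  rw [this]
  refine (abs_add_three _ _ _).trans ?_
  linarith


/-- fourth moment of the standard Gaussian -/
def M4 : ℝ := ∫ x, x ^ 4 ∂stdG

lemma M4_nonneg : 0 ≤ M4 := integral_nonneg fun x => by positivity

lemma gauss_scale {a : ℝ} (ha : 0 ≤ a) :
    gaussianReal 0 (Real.toNNReal a) = stdG.map (fun x => √a * x) := by
  rw [gaussianReal_map_const_mul]
  congr 1
  · simp
  · ext; simp [Real.sq_sqrt ha, ha]

lemma gauss_int_pow (a : ℝ) (k : ℕ) :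
    Integrable (fun x : ℝ => x ^ k) (gaussianReal 0 (Real.toNNReal a)) := by
  have := (memLp_id_gaussianReal (μ := 0) (v := Real.toNNReal a) (k : ℝ≥0)).integrable_norm_pow' (p := k)
  refine (this.mono' (by fun_prop) (ae_of_all _ fun x => ?_))
  simp

lemma gauss_m4 {a : ℝ} (ha : 0 ≤ a) :
    ∫ x, x ^ 4 ∂(gaussianReal 0 (Real.toNNReal a)) = a ^ 2 * M4 := by
  rw [gauss_scale ha, integral_map (by fun_prop) (by fun_prop), M4, ← integral_const_mul]
  refine integral_congr_ae (ae_of_all _ fun x => ?_)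
  have : √a ^ 4 = a ^ 2 := by rw [show 4 = 2 * 2 from rfl, pow_mul, Real.sq_sqrt ha]
  simp only [mul_pow, this]

lemma gauss_m2 {a : ℝ} (ha : 0 ≤ a) :
    ∫ x, x ^ 2 ∂(gaussianReal 0 (Real.toNNReal a)) = a := by
  rw [gauss_scale ha, integral_map (by fun_prop) (by fun_prop)]
  simp only [mul_pow, Real.sq_sqrt ha]
  rw [integral_const_mul, std_sq, mul_one]

lemma coord_int {d : ℕ} (α : Fin d → ℝ) (i : Fin d) (f : ℝ → ℝ) (hf : Measurable f) :
    ∫ y, f (y i) ∂(gaussPi d α) = ∫ x, f x ∂(gaussianReal 0 (Real.toNNReal (α i))) := by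
  unfold gaussPi
  exact integral_comp_eval (X := fun _ : Fin d => ℝ)
    (μ := fun i => gaussianReal 0 (Real.toNNReal (α i))) (i := i) (f := f) hf.aestronglyMeasurable

/-- weighted sum of squares -/
def quad {d : ℕ} (w y : Fin d → ℝ) : ℝ := ∑ i, w i * y i ^ 2

/-- diagonal bilinear form -/
def bil {d : ℕ} (w y z : Fin d → ℝ) : ℝ := ∑ i, w i * (y i * z i)

lemma quad_memLp {d : ℕ} (α w : Fin d → ℝ) : MemLp (quad w) 2 (gaussPi d α) := by
  unfold quad
  refine memLp_finsetSum _ fun i _ => ?_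
  have h : MemLp (fun x : ℝ => w i * x ^ 2) 2 (gaussianReal 0 (Real.toNNReal (α i))) := by
    refine MemLp.const_mul ((memLp_two_iff_integrable_sq (by fun_prop)).2 ?_) _
    have := gauss_int_pow (α i) 4
    simpa [← pow_mul] using this
  exact h.comp_measurePreserving (measurePreserving_eval _ i)

lemma quad_mean {d : ℕ} (α w : Fin d → ℝ) (hα : ∀ i, 0 ≤ α i) :
    ∫ y, quad w y ∂(gaussPi d α) = ∑ i, w i * α i := by
  unfold quad
  rw [integral_finsetSum]
  · refine Finset.sum_congr rfl fun i _ => ?_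
    rw [integral_const_mul, coord_int α i (fun x : ℝ => x ^ 2) (by fun_prop),
      gauss_m2 (hα i)]
  · intro i _
    have := (gauss_int_pow (α i) 2)
    exact ((measurePreserving_eval (fun i => gaussianReal 0 (Real.toNNReal (α i))) i).integrable_comp_of_integrable
      this).const_mul _

lemma quad_var {d : ℕ} (α w : Fin d → ℝ) (hα : ∀ i, 0 ≤ α i) :
    ∫ y, (quad w y - ∑ i, w i * α i) ^ 2 ∂(gaussPi d α) ≤ M4 * ∑ i, w i ^ 2 * α i ^ 2 := by
  have hv : Var[quad w; gaussPi d α] = ∫ y, (quad w y - ∑ i, w i * α i) ^ 2 ∂(gaussPi d α) := by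
    rw [variance_eq_integral (quad_memLp α w).aemeasurable, quad_mean α w hα]
  rw [← hv]
  have hs : quad w = ∑ i, fun y : Fin d → ℝ => (fun x : ℝ => w i * x ^ 2) (y i) := by
    ext y; simp [quad]
  have hm : ∀ i, MemLp (fun x : ℝ => w i * x ^ 2) 2 (gaussianReal 0 (Real.toNNReal (α i))) := by
    intro i
    refine MemLp.const_mul ((memLp_two_iff_integrable_sq (by fun_prop)).2 ?_) _
    have := gauss_int_pow (α i) 4
    simpa [← pow_mul] using this
  rw [hs, gaussPi, variance_sum_pi (X := fun i (x : ℝ) => w i * x ^ 2) hm, Finset.mul_sum]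
  refine Finset.sum_le_sum fun i _ => ?_
  rw [variance_const_mul]
  have := variance_le_expectation_sq (μ := gaussianReal 0 (Real.toNNReal (α i)))
    (X := fun x : ℝ => x ^ 2) (by fun_prop)
  have e : ∫ x, ((fun x : ℝ => x ^ 2) ^ 2) x ∂(gaussianReal 0 (Real.toNNReal (α i))) = α i ^ 2 * M4 := by
    rw [← gauss_m4 (hα i)]
    refine integral_congr_ae (ae_of_all _ fun x => ?_)
    simp only [Pi.pow_apply]; ring
  rw [e] at this
  nlinarith [sq_nonneg (w i)]

lemma coord_sq_int {d : ℕ} (α : Fin d → ℝ) (i : Fin d) (k : ℕ) :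
    Integrable (fun y : Fin d → ℝ => y i ^ k) (gaussPi d α) :=
  (measurePreserving_eval (fun i => gaussianReal 0 (Real.toNNReal (α i))) i).integrable_comp_of_integrable
      (gauss_int_pow (α i) k)

lemma bil_memLp {d : ℕ} (α w : Fin d → ℝ) :
    MemLp (fun q : (Fin d → ℝ) × (Fin d → ℝ) => bil w q.1 q.2) 2
      ((gaussPi d α).prod (gaussPi d α)) := by
  unfold bil
  refine memLp_finsetSum _ fun i _ => MemLp.const_mul ?_ _
  refine (memLp_two_iff_integrable_sq (by fun_prop)).2 ?_
  simp only [mul_pow]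
  exact (coord_sq_int α i 2).mul_prod (coord_sq_int α i 2)

lemma lin_memLp {d : ℕ} (α a : Fin d → ℝ) : MemLp (fun x => dotp x a) 2 (gaussPi d α) := by
  unfold dotp
  refine memLp_finsetSum _ fun i _ => ?_
  have := (memLp_two_iff_integrable_sq (μ := gaussPi d α) (f := fun y : Fin d → ℝ => y i)
    (measurable_pi_apply i).aestronglyMeasurable).2 (coord_sq_int α i 2)
  exact this.mul_const (a i)

lemma lin_mean {d : ℕ} (α a : Fin d → ℝ) : ∫ x, dotp x a ∂(gaussPi d α) = 0 := by
  unfold dotp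
  rw [integral_finsetSum]
  · refine Finset.sum_eq_zero fun i _ => ?_
    rw [integral_mul_const, coord_int α i (fun x : ℝ => x) (by fun_prop),
      integral_id_gaussianReal, zero_mul]
  · intro i _
    have := coord_sq_int α i 1
    simp only [pow_one] at this
    exact this.mul_const _

lemma lin_sq {d : ℕ} (α a : Fin d → ℝ) (hα : ∀ i, 0 ≤ α i) :
    ∫ x, dotp x a ^ 2 ∂(gaussPi d α) = ∑ i, α i * a i ^ 2 := by
  rw [← variance_of_integral_eq_zero (lin_memLp α a).aemeasurable (lin_mean α a)]
  have hs : (fun x : Fin d → ℝ => dotp x a) = ∑ i, fun y : Fin d → ℝ => (fun x : ℝ => a i * x) (y i) := by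
    ext y; simp [dotp, mul_comm]
  have hm : ∀ i, MemLp (fun x : ℝ => a i * x) 2 (gaussianReal 0 (Real.toNNReal (α i))) := by
    intro i
    refine MemLp.const_mul ((memLp_two_iff_integrable_sq (by fun_prop)).2 ?_) _
    exact gauss_int_pow (α i) 2
  rw [hs, gaussPi, variance_sum_pi (X := fun i (x : ℝ) => a i * x) hm]
  refine Finset.sum_congr rfl fun i _ => ?_
  rw [variance_const_mul, variance_fun_id_gaussianReal, Real.coe_toNNReal _ (hα i)]; ring

lemma bil_eq_dotp {d : ℕ} (w y z : Fin d → ℝ) : bil w y z = dotp z (fun i => w i * y i) := by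
  unfold bil dotp; exact Finset.sum_congr rfl fun i _ => by ring

lemma bil_sq {d : ℕ} (α w : Fin d → ℝ) (hα : ∀ i, 0 ≤ α i) :
    ∫ q, bil w q.1 q.2 ^ 2 ∂((gaussPi d α).prod (gaussPi d α)) = ∑ i, w i ^ 2 * α i ^ 2 := by
  rw [integral_prod _ (bil_memLp α w).integrable_sq]
  simp only [bil_eq_dotp]
  simp_rw [lin_sq α _ hα]
  have := quad_mean α (fun i => α i * w i ^ 2) hα
  unfold quad at this
  simp_rw [mul_pow, ← mul_assoc]
  rw [this]
  exact Finset.sum_congr rfl fun i _ => by ring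


/-- centered edge kernel -/
def fK {d : ℕ} (p t : ℝ) (x y : Fin d → ℝ) : ℝ := (if t ≤ dotp x y then (1 : ℝ) else 0) - p

lemma fK_bd {d : ℕ} {p : ℝ} (hp0 : 0 ≤ p) (hp1 : p ≤ 1) (t : ℝ) (x y : Fin d → ℝ) :
    |fK p t x y| ≤ 1 := by
  unfold fK
  rw [abs_le]
  split_ifs <;> constructor <;> linarith

lemma dotp_comm {d : ℕ} (x y : Fin d → ℝ) : dotp x y = dotp y x := by
  unfold dotp; exact Finset.sum_congr rfl fun i _ => mul_comm _ _

lemma fK_comm {d : ℕ} (p t : ℝ) (x y : Fin d → ℝ) : fK p t x y = fK p t y x := by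
  unfold fK; rw [dotp_comm]

lemma fK_meas {d : ℕ} (p t : ℝ) {Ω : Type*} [MeasurableSpace Ω] (f g : Ω → Fin d → ℝ)
    (hf : Measurable f) (hg : Measurable g) : Measurable (fun ω => fK p t (f ω) (g ω)) := by
  unfold fK
  refine (Measurable.ite ?_ measurable_const measurable_const).sub measurable_const
  refine measurableSet_le measurable_const ?_
  unfold dotp
  refine Finset.measurable_sum _ fun i _ => ?_
  exact ((measurable_pi_apply i).comp hf).mul ((measurable_pi_apply i).comp hg)

lemma dotp_div {d : ℕ} (s : ℝ) (x y : Fin d → ℝ) : dotp x (fun i => y i / s) = dotp x y / s := by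
  unfold dotp; rw [Finset.sum_div]; exact Finset.sum_congr rfl fun i _ => by ring

lemma fK_scale {d : ℕ} (p t s : ℝ) (hs : 0 < s) (x y : Fin d → ℝ) :
    fK p t x y = (if t / s ≤ dotp x (fun i => y i / s) then (1 : ℝ) else 0) - p := by
  simp only [fK, dotp_div, div_le_div_iff_of_pos_right hs]

lemma quad_scale {d : ℕ} (α y : Fin d → ℝ) (s : ℝ) :
    quad (fun i => α i / s ^ 2) y = ∑ i, α i * (y i / s) ^ 2 := by
  unfold quad
  exact Finset.sum_congr rfl fun i _ => by rw [div_pow]; ring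

lemma bil_scale {d : ℕ} (α y z : Fin d → ℝ) (s : ℝ) :
    bil (fun i => α i / s ^ 2) y z = ∑ i, α i * ((y i / s) * (z i / s)) := by
  unfold bil
  exact Finset.sum_congr rfl fun i _ => by ring

lemma kernel_bound {d : ℕ} (α : Fin d → ℝ) (hα : ∀ i, 0 ≤ α i) (s t p K : ℝ) (hs : 0 < s)
    (hK : 1 ≤ K) (hv : |t / s| ≤ K) (hp0 : 0 ≤ p) (hp1 : p ≤ 1) (y z : Fin d → ℝ) :
    |(∫ x, fK p t x y * fK p t x z ∂(gaussPi d α))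
        - ph (t / s) ^ 2 * bil (fun i => α i / s ^ 2) y z|
      ≤ 100 * K ^ 2 * ((quad (fun i => α i / s ^ 2) y - 1) ^ 2
        + (quad (fun i => α i / s ^ 2) z - 1) ^ 2
        + bil (fun i => α i / s ^ 2) y z ^ 2 + (Qf (t / s) - p) ^ 2) := by
  set v := t / s
  set a := quad (fun i => α i / s ^ 2) y with ha
  set b := quad (fun i => α i / s ^ 2) z with hb
  set c := bil (fun i => α i / s ^ 2) y z with hc
  by_cases hg : |a - 1| ≤ 1 / 4 ∧ |b - 1| ≤ 1 / 4 ∧ |c| ≤ 1 / 4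
  · obtain ⟨g1, g2, g3⟩ := hg
    have ha0 : 0 < a := by linarith [(abs_le.1 g1).1]
    have e := joint_int α hα (fun i => y i / s) (fun i => z i / s) a b c (b - c ^ 2 / a)
      (by rw [ha, quad_scale]) (by rw [hb, quad_scale]) (by rw [hc, bil_scale]) rfl ha0
      (schur_nonneg α hα (fun i => y i / s) (fun i => z i / s) a b c
        (by rw [ha, quad_scale]) (by rw [hb, quad_scale]) (by rw [hc, bil_scale]) ha0)
      (fun q => ((if v ≤ q.1 then (1 : ℝ) else 0) - p) * ((if v ≤ q.2 then (1 : ℝ) else 0) - p))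
      (by
        exact (((ind_meas v).comp measurable_fst).sub measurable_const).mul
          (((ind_meas v).comp measurable_snd).sub measurable_const))
    simp_rw [fK_scale p t s hs]
    rw [e]
    exact core_bound v a b c _ p K hK hv hp0 hp1 g1 g2 g3 rfl
  · have h1 : |∫ x, fK p t x y * fK p t x z ∂(gaussPi d α)| ≤ 1 := by
      rw [← Real.norm_eq_abs]
      refine (norm_integral_le_of_norm_le_const (C := 1) (ae_of_all _ fun x => ?_)).trans (by simp)
      rw [norm_mul]
      exact mul_le_one₀ (fK_bd hp0 hp1 t x y) (norm_nonneg _) (fK_bd hp0 hp1 t x z)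
    have h2 : |ph v ^ 2 * c| ≤ 1 + c ^ 2 := by
      have hp2 : ph v ^ 2 ≤ 1 := pow_le_one₀ (ph_pos v).le (ph_le_one v)
      rw [abs_mul, abs_of_nonneg (sq_nonneg (ph v))]
      have : |c| ≤ 1 + c ^ 2 := by
        rw [← sq_abs c]; nlinarith [sq_nonneg (|c| - 1), abs_nonneg c]
      exact (mul_le_of_le_one_left (abs_nonneg _) hp2).trans this
    have h3 : 1 / 16 ≤ (a - 1) ^ 2 + (b - 1) ^ 2 + c ^ 2 := by
      by_contra hcon
      push Not at hcon
      refine hg ⟨abs_le_of_sq_le_sq ?_ (by norm_num), abs_le_of_sq_le_sq ?_ (by norm_num), abs_le_of_sq_le_sq ?_ (by norm_num)⟩ <;>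
      linarith [sq_nonneg (a - 1), sq_nonneg (b - 1), sq_nonneg c]
    have hK2 : 1 ≤ K ^ 2 := one_le_pow₀ hK
    set W := (a - 1) ^ 2 + (b - 1) ^ 2 + c ^ 2 + (Qf v - p) ^ 2 with hW
    have h4 : 1 / 16 ≤ W := by linarith [sq_nonneg (Qf v - p)]
    have h5 : c ^ 2 ≤ W := by linarith [sq_nonneg (Qf v - p), sq_nonneg (a - 1), sq_nonneg (b - 1)]
    have h6 : 100 * W ≤ 100 * K ^ 2 * W := by
      have := mul_le_mul_of_nonneg_right hK2 (by linarith : 0 ≤ 100 * W)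
      linarith
    refine (abs_sub _ _).trans ?_
    linarith

/-- marginal tail probability approximates `Qf` -/
lemma marginal_bound {d : ℕ} (α : Fin d → ℝ) (hα : ∀ i, 0 ≤ α i) (s t p K : ℝ) (hs : 0 < s)
    (hK : 1 ≤ K) (hv : |t / s| ≤ K) (y : Fin d → ℝ) :
    |(∫ x, fK p t x y ∂(gaussPi d α)) + p - Qf (t / s)|
      ≤ 4 * K * |quad (fun i => α i / s ^ 2) y - 1| := by
  set v := t / s
  set a := quad (fun i => α i / s ^ 2) y with ha
  have hm : Measurable (fun x : Fin d → ℝ => if t ≤ dotp x y then (1 : ℝ) else 0) := by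
    have := (fK_meas p t (fun x : Fin d → ℝ => x) (fun _ => y) measurable_id measurable_const).add_const p
    simpa [fK] using this
  have hI : Integrable (fun x : Fin d → ℝ => if t ≤ dotp x y then (1 : ℝ) else 0) (gaussPi d α) := by
    refine Integrable.of_bound (C := 1) hm.aestronglyMeasurable (ae_of_all _ fun x => ?_)
    split_ifs <;> simp
  have e0 : (∫ x, fK p t x y ∂(gaussPi d α)) + p
      = ∫ x, (if t ≤ dotp x y then (1 : ℝ) else 0) ∂(gaussPi d α) := by
    unfold fK
    rw [integral_sub hI (integrable_const _)]; simp
  rw [e0]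
  by_cases hg : |a - 1| ≤ 1 / 4
  · have ha0 : 0 < a := by linarith [(abs_le.1 hg).1]
    have hsa : 0 < √a := Real.sqrt_pos.2 ha0
    have e := joint_int α hα (fun i => y i / s) (fun i => 0) a 0 0 0
      (by rw [ha, quad_scale]) (by simp) (by simp) (by simp) ha0 le_rfl
      (fun q => (if v ≤ q.1 then (1 : ℝ) else 0)) ((ind_meas v).comp measurable_fst)
    have e1 : ∀ x, (t ≤ dotp x y) = (v ≤ dotp x (fun i => y i / s)) := by
      intro x; rw [dotp_div, div_le_div_iff_of_pos_right hs]
    simp_rw [e1]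
    rw [e]
    have e2 : ∀ x : ℝ, (v ≤ √a * x) = (v * (√a)⁻¹ ≤ x) := by
      intro x
      rw [← div_eq_mul_inv, div_le_iff₀ hsa, mul_comm]
    simp_rw [e2]
    rw [integral_fun_fst (fun x : ℝ => if v * (√a)⁻¹ ≤ x then (1 : ℝ) else 0), int_ind]
    simp only [probReal_univ, one_smul]
    refine (Qf_lip _ _).trans ?_
    rw [show v * (√a)⁻¹ - v = v * ((√a)⁻¹ - 1) by ring, abs_mul]
    have h1 := inv_sqrt_sub_one (a := a) (by linarith [(abs_le.1 hg).1])
    have h2 := mul_le_mul hv h1 (abs_nonneg _) (by linarith)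
    have h3 : 0 ≤ K * |a - 1| := mul_nonneg (by linarith) (abs_nonneg _)
    linarith
  · push Not at hg
    have h1 : 0 ≤ ∫ x, (if t ≤ dotp x y then (1 : ℝ) else 0) ∂(gaussPi d α) :=
      integral_nonneg fun x => by simp only; split_ifs <;> simp
    have h2 : ∫ x, (if t ≤ dotp x y then (1 : ℝ) else 0) ∂(gaussPi d α) ≤ 1 := by
      refine (integral_mono hI (integrable_const 1) fun x => ?_).trans (by simp)
      simp only; split_ifs <;> simp
    have h3 := Qf_bd v
    have h4 : 1 ≤ 4 * K * |a - 1| := by nlinarith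
    refine le_trans ?_ h4
    rw [abs_le]; constructor <;> linarith

lemma main_term {d : ℕ} (α : Fin d → ℝ) (hα : ∀ i, 0 ≤ α i) (s t p : ℝ) (hs : 0 < s)
    (y : Fin d → ℝ) (a : ℝ) (ha : a = quad (fun i => α i / s ^ 2) y) (ha0 : 0 < a) :
    ∫ z, fK p t y z * bil (fun i => α i / s ^ 2) y z ∂(gaussPi d α)
      = quad (fun i => α i ^ 2) y / s ^ 3 / √a * ph (t / s * (√a)⁻¹) := by
  set v := t / s
  have hsa : 0 < √a := Real.sqrt_pos.2 ha0
  set y' : Fin d → ℝ := fun i => y i / s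
  set z' : Fin d → ℝ := fun i => α i / s ^ 2 * y i
  set c := quad (fun i => α i ^ 2) y / s ^ 3 with hc
  set b := ∑ i, α i * z' i ^ 2 with hb
  have hc' : c = ∑ i, α i * (y' i * z' i) := by
    rw [hc, quad, Finset.sum_div]
    exact Finset.sum_congr rfl fun i _ => by simp only [y', z']; field_simp
  have ha' : a = ∑ i, α i * y' i ^ 2 := by rw [ha, quad_scale]
  set w := b - c ^ 2 / a with hw
  have e := joint_int α hα y' z' a b c w ha' hb hc' hw ha0
      (schur_nonneg α hα y' z' a b c ha' hb hc' ha0)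
      (fun q => ((if v ≤ q.1 then (1 : ℝ) else 0) - p) * q.2)
      ((((ind_meas v).comp measurable_fst).sub measurable_const).mul measurable_snd)
  have e0 : ∀ z, fK p t y z * bil (fun i => α i / s ^ 2) y z
      = ((if v ≤ dotp z y' then (1 : ℝ) else 0) - p) * dotp z z' := by
    intro z
    rw [fK_comm, fK_scale p t s hs, bil_eq_dotp]
  simp_rw [e0]
  rw [e]
  have e2 : ∀ x : ℝ, (v ≤ √a * x) = (v * (√a)⁻¹ ≤ x) := by
    intro x
    rw [← div_eq_mul_inv, div_le_iff₀ hsa, mul_comm]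
  have e3 : ∀ q : ℝ × ℝ, ((if v ≤ √a * q.1 then (1 : ℝ) else 0) - p) * (c / √a * q.1 + √w * q.2)
      = (c / √a) * ((if v * (√a)⁻¹ ≤ q.1 then (1 : ℝ) else 0) * q.1 - p * q.1)
        + ((if v * (√a)⁻¹ ≤ q.1 then (1 : ℝ) else 0) - p) * (√w * q.2) := by
    intro q; simp_rw [e2]; ring
  simp_rw [e3]
  have i1 : Integrable (fun x : ℝ => (c / √a) * ((if v * (√a)⁻¹ ≤ x then (1 : ℝ) else 0) * x - p * x)) stdG :=
    ((ind_x_int _).sub (std_int_id.const_mul p)).const_mul _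
  have i2 : Integrable (fun x : ℝ => (if v * (√a)⁻¹ ≤ x then (1 : ℝ) else 0) - p) stdG :=
    (ind_int _).sub (integrable_const _)
  rw [integral_add (i1.comp_fst stdG) (i2.mul_prod (std_int_id.const_mul √w)),
    integral_fun_fst (fun x : ℝ => (c / √a) * ((if v * (√a)⁻¹ ≤ x then (1 : ℝ) else 0) * x - p * x)),
    integral_prod_mul (fun x : ℝ => (if v * (√a)⁻¹ ≤ x then (1 : ℝ) else 0) - p) (fun x : ℝ => √w * x),
    integral_const_mul, integral_const_mul,
    integral_sub (ind_x_int _) (std_int_id.const_mul p), int_ind_x, integral_const_mul, std_mean]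
  simp

lemma main_nonneg {d : ℕ} (α : Fin d → ℝ) (hα : ∀ i, 0 ≤ α i) (s t p : ℝ) (hs : 0 < s)
    (y : Fin d → ℝ) :
    0 ≤ ∫ z, fK p t y z * bil (fun i => α i / s ^ 2) y z ∂(gaussPi d α) := by
  have hn : ∀ i ∈ Finset.univ, 0 ≤ α i / s ^ 2 * y i ^ 2 :=
    fun i _ => mul_nonneg (div_nonneg (hα i) (sq_nonneg _)) (sq_nonneg _)
  have h0 : 0 ≤ quad (fun i => α i / s ^ 2) y := Finset.sum_nonneg hn
  rcases h0.eq_or_lt with h | h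
  · have hz := (Finset.sum_eq_zero_iff_of_nonneg hn).1 h.symm
    have : ∀ z, bil (fun i => α i / s ^ 2) y z = 0 := by
      intro z
      refine Finset.sum_eq_zero fun i hi => ?_
      rcases mul_eq_zero.1 (hz i hi) with h' | h'
      · show α i / s ^ 2 * (y i * z i) = 0
        rw [h']; simp
      · have : y i = 0 := by simpa using h'
        rw [this]; simp
    simp [this]
  · rw [main_term α hα s t p hs y _ rfl h]
    have : 0 ≤ quad (fun i => α i ^ 2) y :=
      Finset.sum_nonneg fun i _ => mul_nonneg (sq_nonneg _) (sq_nonneg _)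
    have := ph_pos (t / s * (√(quad (fun i => α i / s ^ 2) y))⁻¹)
    positivity

lemma main_lower {d : ℕ} (α : Fin d → ℝ) (hα : ∀ i, 0 ≤ α i) (s t p K : ℝ) (hs : 0 < s)
    (hK : 1 ≤ K) (hv : |t / s| ≤ K) (y : Fin d → ℝ) (T ε : ℝ) (hT : 0 < T) (hε : 0 < ε) :
    ph (2 * K) / (2 * s ^ 3) * (quad (fun i => α i ^ 2) y
        - ε / (2 * T) * quad (fun i => α i ^ 2) y ^ 2
        - 8 / ε * T * (quad (fun i => α i / s ^ 2) y - 1) ^ 2)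
      ≤ ∫ z, fK p t y z * bil (fun i => α i / s ^ 2) y z ∂(gaussPi d α) := by
  set a := quad (fun i => α i / s ^ 2) y with ha
  set B := quad (fun i => α i ^ 2) y with hB
  have hB0 : 0 ≤ B := Finset.sum_nonneg fun i _ => mul_nonneg (sq_nonneg _) (sq_nonneg _)
  have hph := ph_pos (2 * K)
  by_cases hg : |a - 1| ≤ 1 / 4
  · have ha' := abs_le.1 hg
    have ha0 : 0 < a := by linarith
    have hsa : 0 < √a := Real.sqrt_pos.2 ha0
    rw [main_term α hα s t p hs y a ha ha0, ← hB]
    have h1 := (abs_le.1 ((inv_sqrt_sub_one (a := a) (by linarith)).trans hg))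
    have h2 : 1 / 2 ≤ (√a)⁻¹ := by linarith
    have h3 : ph (2 * K) ≤ ph (t / s * (√a)⁻¹) := by
      refine ph_mono ?_
      rw [abs_mul, abs_of_pos (inv_pos.2 hsa), mul_comm 2 K]
      exact mul_le_mul hv (by linarith) (inv_pos.2 hsa).le (by linarith)
    have h4 : B - ε / (2 * T) * B ^ 2 - 8 / ε * T * (a - 1) ^ 2 ≤ B := by
      have : 0 ≤ ε / (2 * T) * B ^ 2 := by positivity
      have : 0 ≤ 8 / ε * T * (a - 1) ^ 2 := by positivity
      linarith
    calc _ ≤ ph (2 * K) / (2 * s ^ 3) * B := mul_le_mul_of_nonneg_left h4 (by positivity)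
      _ = (B / s ^ 3) * (1 / 2) * ph (2 * K) := by field_simp
      _ ≤ (B / s ^ 3) * (√a)⁻¹ * ph (t / s * (√a)⁻¹) := by gcongr
      _ = _ := by rw [div_eq_mul_inv (B / s ^ 3)]
  · refine le_trans ?_ (main_nonneg α hα s t p hs y)
    push Not at hg
    refine mul_nonpos_of_nonneg_of_nonpos (by positivity) ?_
    have h1 : 1 / 16 ≤ (a - 1) ^ 2 := by
      rw [← sq_abs]; nlinarith
    have h2 : 8 / ε * T * (1 / 16) ≤ 8 / ε * T * (a - 1) ^ 2 :=
      mul_le_mul_of_nonneg_left h1 (by positivity)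
    have h3 : B ≤ ε / (2 * T) * B ^ 2 + 8 / ε * T * (1 / 16) := by
      have : ε / (2 * T) * B ^ 2 + 8 / ε * T * (1 / 16) - B = (ε * B - T) ^ 2 / (2 * T * ε) := by
        field_simp; ring
      have : 0 ≤ (ε * B - T) ^ 2 / (2 * T * ε) := by positivity
      linarith
    linarith


lemma fK_int {d : ℕ} {p : ℝ} (hp0 : 0 ≤ p) (hp1 : p ≤ 1) (t : ℝ) (α : Fin d → ℝ) :
    Integrable (fun q : (Fin d → ℝ) × (Fin d → ℝ) => fK p t q.1 q.2)
      ((gaussPi d α).prod (gaussPi d α)) :=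
  Integrable.of_bound (C := 1)
    (fK_meas p t _ _ measurable_fst measurable_snd).aestronglyMeasurable
    (ae_of_all _ fun q => fK_bd hp0 hp1 t q.1 q.2)

lemma thresh_int {d : ℕ} {p : ℝ} (hp0 : 0 ≤ p) (t : ℝ) (α : Fin d → ℝ)
    (h : IsThreshold d α p t) :
    ∫ q, fK p t q.1 q.2 ∂((gaussPi d α).prod (gaussPi d α)) = 0 := by
  have hm : MeasurableSet {xy : (Fin d → ℝ) × (Fin d → ℝ) | t ≤ dotp xy.1 xy.2} := by
    refine measurableSet_le measurable_const ?_
    unfold dotp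
    exact Finset.measurable_sum _ fun i _ =>
      ((measurable_pi_apply i).comp measurable_fst).mul ((measurable_pi_apply i).comp measurable_snd)
  have e : ∀ q : (Fin d → ℝ) × (Fin d → ℝ), fK p t q.1 q.2
      = Set.indicator {xy : (Fin d → ℝ) × (Fin d → ℝ) | t ≤ dotp xy.1 xy.2} (fun _ => (1 : ℝ)) q - p := by
    intro q; simp [fK, Set.indicator_apply]
  simp_rw [e]
  rw [integral_sub ((integrable_const _).indicator hm) (integrable_const _),
    integral_indicator_const _ hm, Measure.real, show ((gaussPi d α).prod (gaussPi d α)) {xy | t ≤ dotp xy.1 xy.2} = ENNReal.ofReal p from h]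
  simp [ENNReal.toReal_ofReal hp0]

lemma thresh_bound {d : ℕ} {p : ℝ} (hp0 : 0 ≤ p) (hp1 : p ≤ 1) (t : ℝ) (α : Fin d → ℝ)
    (hα : ∀ i, 0 ≤ α i) (h : IsThreshold d α p t) (s K : ℝ) (hs : 0 < s)
    (hS : s ^ 2 = ∑ i, α i ^ 2) (hK : 1 ≤ K) (hK1 : 1 ≤ p * K ^ 2) (hK2 : 1 ≤ (1 - p) * K ^ 2) :
    |t / s| ≤ K := by
  have h0 := thresh_int hp0 t α h
  have hI := fK_int hp0 hp1 t α
  have hb := bil_sq α (fun _ => (1 : ℝ)) hα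
  have hbi := (bil_memLp α (fun _ => (1 : ℝ))).integrable_sq
  have hd : ∀ q : (Fin d → ℝ) × (Fin d → ℝ), bil (fun _ => (1 : ℝ)) q.1 q.2 = dotp q.1 q.2 := by
    intro q; simp [bil, dotp]
  simp only [one_pow, one_mul] at hb
  rw [← hS] at hb
  have key : t ^ 2 ≤ s ^ 2 * K ^ 2 := by
    rcases le_or_gt 0 t with ht | ht
    · have : ∫ q, t ^ 2 * (fK p t q.1 q.2 + p) ∂((gaussPi d α).prod (gaussPi d α)) ≤ s ^ 2 := by
        rw [← hb]
        refine integral_mono ((hI.add (integrable_const p)).const_mul _) hbi fun q => ?_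
        simp only [hd, fK, sub_add_cancel]
        split_ifs with hq
        · rw [mul_one]; exact pow_le_pow_left₀ ht hq 2
        · rw [mul_zero]; exact sq_nonneg _
      rw [integral_const_mul, integral_add hI (integrable_const p), h0] at this
      simp only [integral_const, probReal_univ, one_smul, zero_add] at this
      have h1 := mul_le_mul_of_nonneg_left hK1 (sq_nonneg t)
      have h2 := mul_le_mul_of_nonneg_right this (sq_nonneg K)
      linarith
    · have : ∫ q, t ^ 2 * (1 - p - fK p t q.1 q.2) ∂((gaussPi d α).prod (gaussPi d α)) ≤ s ^ 2 := by
        rw [← hb]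
        refine integral_mono (((integrable_const (1 - p)).sub hI).const_mul _) hbi fun q => ?_
        simp only [hd, fK]
        split_ifs with hq
        · rw [show 1 - p - (1 - p) = 0 by ring, mul_zero]; exact sq_nonneg _
        · push Not at hq
          rw [show 1 - p - (0 - p) = 1 by ring, mul_one]
          have := pow_le_pow_left₀ (by linarith : 0 ≤ -t) (by linarith : -t ≤ -dotp q.1 q.2) 2
          simpa using this
      rw [integral_const_mul, integral_sub (integrable_const (1 - p)) hI, h0] at this
      simp only [integral_const, probReal_univ, one_smul, sub_zero] at this
      have h1 := mul_le_mul_of_nonneg_left hK2 (sq_nonneg t)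
      have h2 := mul_le_mul_of_nonneg_right this (sq_nonneg K)
      linarith
  refine abs_le_of_sq_le_sq ?_ (by linarith)
  rw [div_pow, div_le_iff₀ (by positivity)]
  linarith

lemma var_a {d : ℕ} (α : Fin d → ℝ) (hα : ∀ i, 0 ≤ α i) (s : ℝ) (hs : 0 < s)
    (hS : s ^ 2 = ∑ i, α i ^ 2) :
    ∫ y, (quad (fun i => α i / s ^ 2) y - 1) ^ 2 ∂(gaussPi d α)
      ≤ M4 * ∑ i, (α i / s ^ 2) ^ 2 * α i ^ 2 := by
  have h := quad_var α (fun i => α i / s ^ 2) hα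
  have e : ∑ i, α i / s ^ 2 * α i = 1 := by
    have : ∑ i, α i / s ^ 2 * α i = (∑ i, α i ^ 2) / s ^ 2 := by
      rw [Finset.sum_div]; exact Finset.sum_congr rfl fun i _ => by ring
    rw [this, ← hS]; field_simp
  rwa [e] at h

lemma quad_sub_memLp {d : ℕ} (α w : Fin d → ℝ) (c : ℝ) :
    MemLp (fun y => quad w y - c) 2 (gaussPi d α) :=
  (quad_memLp α w).sub (memLp_const c)

lemma Qf_p {d : ℕ} {p : ℝ} (hp0 : 0 ≤ p) (hp1 : p ≤ 1) (t : ℝ) (α : Fin d → ℝ)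
    (hα : ∀ i, 0 ≤ α i) (h : IsThreshold d α p t) (s K : ℝ) (hs : 0 < s)
    (hS : s ^ 2 = ∑ i, α i ^ 2) (hK : 1 ≤ K) (hv : |t / s| ≤ K) :
    (Qf (t / s) - p) ^ 2 ≤ 16 * K ^ 2 * (M4 * ∑ i, (α i / s ^ 2) ^ 2 * α i ^ 2) := by
  have h0 := thresh_int hp0 t α h
  have hI := fK_int hp0 hp1 t α
  rw [integral_prod_symm _ hI] at h0
  have hI2 : Integrable (fun y => ∫ x, fK p t x y ∂(gaussPi d α)) (gaussPi d α) :=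
    hI.integral_prod_right
  set v := t / s
  have hq := quad_sub_memLp α (fun i => α i / s ^ 2) 1
  have hq2 := hq.integrable_sq
  have hq1 : Integrable (fun y => |quad (fun i => α i / s ^ 2) y - 1|) (gaussPi d α) :=
    (hq.integrable (by norm_num)).abs
  set m := ∫ y, |quad (fun i => α i / s ^ 2) y - 1| ∂(gaussPi d α) with hm
  have hm0 : 0 ≤ m := integral_nonneg fun _ => abs_nonneg _
  have h1 : |p - Qf v| ≤ 4 * K * m := by
    have e : ∫ y, ((∫ x, fK p t x y ∂(gaussPi d α)) + p - Qf v) ∂(gaussPi d α) = p - Qf v := by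
      have i1 : Integrable (fun y => (∫ x, fK p t x y ∂(gaussPi d α)) + p) (gaussPi d α) :=
        hI2.add (integrable_const p)
      rw [integral_sub i1 (integrable_const _), integral_add hI2 (integrable_const p), h0]
      simp
    rw [← e, hm, ← integral_const_mul]
    refine (abs_integral_le_integral_abs).trans ?_
    exact integral_mono (((hI2.add (integrable_const p)).sub (integrable_const _)).abs)
      (hq1.const_mul _) fun y => marginal_bound α hα s t p K hs hK hv y
  have h2 : m ^ 2 ≤ ∫ y, (quad (fun i => α i / s ^ 2) y - 1) ^ 2 ∂(gaussPi d α) := by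
    have : 0 ≤ ∫ y, (|quad (fun i => α i / s ^ 2) y - 1| - m) ^ 2 ∂(gaussPi d α) :=
      integral_nonneg fun _ => sq_nonneg _
    have e : ∀ y, (|quad (fun i => α i / s ^ 2) y - 1| - m) ^ 2
        = (quad (fun i => α i / s ^ 2) y - 1) ^ 2
          - (2 * m * |quad (fun i => α i / s ^ 2) y - 1| - m ^ 2) := by
      intro y; rw [sub_sq, sq_abs]; ring
    simp_rw [e] at this
    have i2 : Integrable (fun y => 2 * m * |quad (fun i => α i / s ^ 2) y - 1| - m ^ 2)
      (gaussPi d α) := (hq1.const_mul _).sub (integrable_const _)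
    rw [integral_sub hq2 i2,
      integral_sub (hq1.const_mul _) (integrable_const _), integral_const_mul, ← hm] at this
    simp only [integral_const, probReal_univ, one_smul] at this
    linarith
  have h3 := h2.trans (var_a α hα s hs hS)
  have h4 : |p - Qf v| ^ 2 ≤ (4 * K * m) ^ 2 := pow_le_pow_left₀ (abs_nonneg _) h1 2
  rw [sq_abs] at h4
  have h5 := mul_le_mul_of_nonneg_left h3 (by positivity : 0 ≤ 16 * K ^ 2)
  calc (Qf v - p) ^ 2 = (p - Qf v) ^ 2 := by ring
    _ ≤ (4 * K * m) ^ 2 := h4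
    _ = 16 * K ^ 2 * m ^ 2 := by ring
    _ ≤ _ := h5

lemma g_meas {d : ℕ} (p t : ℝ) (α : Fin d → ℝ) :
    StronglyMeasurable (fun q : (Fin d → ℝ) × (Fin d → ℝ) =>
      ∫ x, fK p t x q.1 * fK p t x q.2 ∂(gaussPi d α)) := by
  have h : StronglyMeasurable
      (fun r : ((Fin d → ℝ) × (Fin d → ℝ)) × (Fin d → ℝ) =>
        fK p t r.2 r.1.1 * fK p t r.2 r.1.2) := by
    refine Measurable.stronglyMeasurable ?_
    exact (fK_meas p t _ _ measurable_snd measurable_fst.fst).mul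
      (fK_meas p t _ _ measurable_snd measurable_fst.snd)
  exact h.integral_prod_right'

lemma g_bd {d : ℕ} {p : ℝ} (hp0 : 0 ≤ p) (hp1 : p ≤ 1) (t : ℝ) (α y z : Fin d → ℝ) :
    |∫ x, fK p t x y * fK p t x z ∂(gaussPi d α)| ≤ 1 := by
  rw [← Real.norm_eq_abs]
  refine (norm_integral_le_of_norm_le_const (C := 1) (ae_of_all _ fun x => ?_)).trans (by simp)
  rw [norm_mul]
  exact mul_le_one₀ (fK_bd hp0 hp1 t x y) (norm_nonneg _) (fK_bd hp0 hp1 t x z)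

lemma fKc_int {d : ℕ} {p : ℝ} (hp0 : 0 ≤ p) (hp1 : p ≤ 1) (t : ℝ) (α w : Fin d → ℝ) :
    Integrable (fun q : (Fin d → ℝ) × (Fin d → ℝ) => fK p t q.1 q.2 * bil w q.1 q.2)
      ((gaussPi d α).prod (gaussPi d α)) :=
  ((bil_memLp α w).integrable (by norm_num)).bdd_mul (c := 1)
    (fK_meas p t _ _ measurable_fst measurable_snd).aestronglyMeasurable
    (ae_of_all _ fun q => fK_bd hp0 hp1 t q.1 q.2)

lemma err_bound {d : ℕ} {p : ℝ} (hp0 : 0 ≤ p) (hp1 : p ≤ 1) (t : ℝ) (α : Fin d → ℝ)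
    (hα : ∀ i, 0 ≤ α i) (h : IsThreshold d α p t) (s K : ℝ) (hs : 0 < s)
    (hS : s ^ 2 = ∑ i, α i ^ 2) (hK : 1 ≤ K) (hv : |t / s| ≤ K) (R : ℝ)
    (hR : R = ∑ i, (α i / s ^ 2) ^ 2 * α i ^ 2) :
    ph (t / s) ^ 2 * (∫ q, fK p t q.1 q.2 * bil (fun i => α i / s ^ 2) q.1 q.2
        ∂((gaussPi d α).prod (gaussPi d α)))
      - 100 * K ^ 2 * (2 * M4 + 1 + 16 * K ^ 2 * M4) * R
    ≤ ∫ q, fK p t q.1 q.2 * (∫ x, fK p t x q.1 * fK p t x q.2 ∂(gaussPi d α))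
        ∂((gaussPi d α).prod (gaussPi d α)) := by
  set v := t / s with hvdef
  have hq2 := (quad_sub_memLp α (fun i => α i / s ^ 2) 1).integrable_sq
  have j1 : Integrable (fun q : (Fin d → ℝ) × (Fin d → ℝ) =>
      (quad (fun i => α i / s ^ 2) q.1 - 1) ^ 2) ((gaussPi d α).prod (gaussPi d α)) :=
    hq2.comp_fst _
  have j2 : Integrable (fun q : (Fin d → ℝ) × (Fin d → ℝ) =>
      (quad (fun i => α i / s ^ 2) q.2 - 1) ^ 2) ((gaussPi d α).prod (gaussPi d α)) :=
    hq2.comp_snd _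
  have j3 := (bil_memLp α (fun i => α i / s ^ 2)).integrable_sq
  have j12 : Integrable (fun q : (Fin d → ℝ) × (Fin d → ℝ) =>
      (quad (fun i => α i / s ^ 2) q.1 - 1) ^ 2 + (quad (fun i => α i / s ^ 2) q.2 - 1) ^ 2)
      ((gaussPi d α).prod (gaussPi d α)) := j1.add j2
  have j123 : Integrable (fun q : (Fin d → ℝ) × (Fin d → ℝ) =>
      (quad (fun i => α i / s ^ 2) q.1 - 1) ^ 2 + (quad (fun i => α i / s ^ 2) q.2 - 1) ^ 2
        + bil (fun i => α i / s ^ 2) q.1 q.2 ^ 2)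
      ((gaussPi d α).prod (gaussPi d α)) := j12.add j3
  have j4 : Integrable (fun q : (Fin d → ℝ) × (Fin d → ℝ) =>
      (quad (fun i => α i / s ^ 2) q.1 - 1) ^ 2 + (quad (fun i => α i / s ^ 2) q.2 - 1) ^ 2
        + bil (fun i => α i / s ^ 2) q.1 q.2 ^ 2 + (Qf v - p) ^ 2)
      ((gaussPi d α).prod (gaussPi d α)) := j123.add (integrable_const _)
  have j5 := fKc_int hp0 hp1 t α (fun i => α i / s ^ 2)
  have j6 : Integrable (fun q : (Fin d → ℝ) × (Fin d → ℝ) =>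
      fK p t q.1 q.2 * (∫ x, fK p t x q.1 * fK p t x q.2 ∂(gaussPi d α)))
      ((gaussPi d α).prod (gaussPi d α)) := by
    refine Integrable.of_bound (C := 1)
      ((fK_meas p t _ _ measurable_fst measurable_snd).aestronglyMeasurable.mul
        (g_meas p t α).aestronglyMeasurable) (ae_of_all _ fun q => ?_)
    rw [norm_mul]
    exact mul_le_one₀ (fK_bd hp0 hp1 t _ _) (norm_nonneg _) (g_bd hp0 hp1 t α _ _)
  have hmono : ∫ q, (ph v ^ 2 * (fK p t q.1 q.2 * bil (fun i => α i / s ^ 2) q.1 q.2)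
      - 100 * K ^ 2 * ((quad (fun i => α i / s ^ 2) q.1 - 1) ^ 2
        + (quad (fun i => α i / s ^ 2) q.2 - 1) ^ 2
        + bil (fun i => α i / s ^ 2) q.1 q.2 ^ 2 + (Qf v - p) ^ 2))
        ∂((gaussPi d α).prod (gaussPi d α))
      ≤ ∫ q, fK p t q.1 q.2 * (∫ x, fK p t x q.1 * fK p t x q.2 ∂(gaussPi d α))
        ∂((gaussPi d α).prod (gaussPi d α)) := by
    refine integral_mono ((j5.const_mul _).sub (j4.const_mul _)) j6 fun q => ?_
    have hk := kernel_bound α hα s t p K hs hK hv hp0 hp1 q.1 q.2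
    have hf := fK_bd hp0 hp1 t q.1 q.2
    simp only
    rw [← hvdef] at hk
    set g := ∫ x, fK p t x q.1 * fK p t x q.2 ∂(gaussPi d α)
    set f := fK p t q.1 q.2
    set c := bil (fun i => α i / s ^ 2) q.1 q.2
    have h1 : |f * (g - ph v ^ 2 * c)| ≤ |g - ph v ^ 2 * c| := by
      rw [abs_mul]; exact mul_le_of_le_one_left (abs_nonneg _) hf
    have h2 := (abs_le.1 (h1.trans hk)).1
    linarith
  rw [integral_sub (j5.const_mul _) (j4.const_mul _), integral_const_mul, integral_const_mul,
    integral_add j123 (integrable_const _), integral_add j12 j3, integral_add j1 j2,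
    integral_fun_fst (fun y => (quad (fun i => α i / s ^ 2) y - 1) ^ 2),
    integral_fun_snd (fun y => (quad (fun i => α i / s ^ 2) y - 1) ^ 2), bil_sq _ _ hα, ← hR] at hmono
  simp only [integral_const, probReal_univ, one_smul] at hmono
  have h1 := var_a α hα s hs hS
  have h2 := Qf_p hp0 hp1 t α hα h s K hs hS hK hv
  rw [← hR] at h1 h2
  have h3 := mul_le_mul_of_nonneg_left (add_le_add (add_le_add (add_le_add h1 h1) (le_refl R)) h2)
    (by positivity : 0 ≤ 100 * K ^ 2)
  refine le_trans ?_ hmono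
  refine sub_le_sub_left (h3.trans (le_of_eq ?_)) _
  ring

lemma main_int {d : ℕ} {p : ℝ} (hp0 : 0 ≤ p) (hp1 : p ≤ 1) (t : ℝ) (α : Fin d → ℝ)
    (hα : ∀ i, 0 ≤ α i) (hα1 : ∀ i, α i ≤ 1) (s K : ℝ) (hs : 0 < s)
    (hS : s ^ 2 = ∑ i, α i ^ 2) (hK : 1 ≤ K) (hv : |t / s| ≤ K) (T : ℝ)
    (hT : T = ∑ i, α i ^ 3) (hT0 : 0 < T) (hs64 : 64 * (1 + M4) ^ 2 ≤ s ^ 2) :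
    ph (2 * K) / (2 * s ^ 3) * (T / 2)
      ≤ ∫ q, fK p t q.1 q.2 * bil (fun i => α i / s ^ 2) q.1 q.2
        ∂((gaussPi d α).prod (gaussPi d α)) := by
  have hM := M4_nonneg
  have j5 := fKc_int hp0 hp1 t α (fun i => α i / s ^ 2)
  rw [integral_prod _ j5]
  set ε : ℝ := 1 / (2 * (1 + M4)) with hε
  have hε0 : 0 < ε := by positivity
  have hq2 := (quad_sub_memLp α (fun i => α i / s ^ 2) 1).integrable_sq
  have hB1 : Integrable (quad (fun i => α i ^ 2)) (gaussPi d α) :=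
    (quad_memLp α (fun i => α i ^ 2)).integrable (by norm_num)
  have hB2 := (quad_memLp α (fun i => α i ^ 2)).integrable_sq
  have k1 : Integrable (fun y => quad (fun i => α i ^ 2) y
        - ε / (2 * T) * quad (fun i => α i ^ 2) y ^ 2) (gaussPi d α) := hB1.sub (hB2.const_mul _)
  have k2 : Integrable (fun y => quad (fun i => α i ^ 2) y
        - ε / (2 * T) * quad (fun i => α i ^ 2) y ^ 2
        - 8 / ε * T * (quad (fun i => α i / s ^ 2) y - 1) ^ 2) (gaussPi d α) :=
    k1.sub (hq2.const_mul _)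
  have hmono : ∫ y, ph (2 * K) / (2 * s ^ 3) * (quad (fun i => α i ^ 2) y
        - ε / (2 * T) * quad (fun i => α i ^ 2) y ^ 2
        - 8 / ε * T * (quad (fun i => α i / s ^ 2) y - 1) ^ 2) ∂(gaussPi d α)
      ≤ ∫ y, ∫ z, fK p t y z * bil (fun i => α i / s ^ 2) y z ∂(gaussPi d α) ∂(gaussPi d α) :=
    integral_mono (k2.const_mul _) j5.integral_prod_left fun y =>
      main_lower α hα s t p K hs hK hv y T ε hT0 hε0
  refine le_trans ?_ hmono
  rw [integral_const_mul]
  refine mul_le_mul_of_nonneg_left ?_ (by have := ph_pos (2 * K); positivity)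
  have mean : ∫ y, quad (fun i => α i ^ 2) y ∂(gaussPi d α) = T := by
    rw [quad_mean _ _ hα, hT]; exact Finset.sum_congr rfl fun i _ => by ring
  rw [integral_sub k1 (hq2.const_mul _), integral_sub hB1 (hB2.const_mul _), integral_const_mul,
    integral_const_mul, mean]
  -- second moment of the quadratic form
  have hvar := quad_var α (fun i => α i ^ 2) hα
  have eT : ∑ i, α i ^ 2 * α i = T := by
    rw [hT]; exact Finset.sum_congr rfl fun i _ => by ring
  rw [eT] at hvar
  have hsq : ∑ i, (α i ^ 2) ^ 2 * α i ^ 2 ≤ T ^ 2 := by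
    have : ∑ i, (α i ^ 2) ^ 2 * α i ^ 2 = ∑ i, (α i ^ 3) ^ 2 :=
      Finset.sum_congr rfl fun i _ => by ring
    rw [this, hT]
    exact Finset.sum_sq_le_sq_sum_of_nonneg fun i _ => pow_nonneg (hα i) 3
  have e2 : ∫ y, (quad (fun i => α i ^ 2) y - T) ^ 2 ∂(gaussPi d α)
      = ∫ y, quad (fun i => α i ^ 2) y ^ 2 ∂(gaussPi d α) - T ^ 2 := by
    have e : ∀ y, (quad (fun i => α i ^ 2) y - T) ^ 2
        = quad (fun i => α i ^ 2) y ^ 2 - (2 * T * quad (fun i => α i ^ 2) y - T ^ 2) := by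
      intro y; ring
    simp_rw [e]
    have i2 : Integrable (fun y => 2 * T * quad (fun i => α i ^ 2) y - T ^ 2)
      (gaussPi d α) := (hB1.const_mul _).sub (integrable_const _)
    rw [integral_sub hB2 i2, integral_sub (hB1.const_mul _) (integrable_const _),
      integral_const_mul, mean]
    simp only [integral_const, probReal_univ, one_smul]
    ring
  rw [e2] at hvar
  have hBB : ∫ y, quad (fun i => α i ^ 2) y ^ 2 ∂(gaussPi d α) ≤ (1 + M4) * T ^ 2 := by
    have := mul_le_mul_of_nonneg_left hsq hM
    linarith
  have hA := var_a α hα s hs hS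
  have hR : ∑ i, (α i / s ^ 2) ^ 2 * α i ^ 2 ≤ 1 / s ^ 2 := by
    have h1 : ∑ i, (α i / s ^ 2) ^ 2 * α i ^ 2 ≤ ∑ i, α i ^ 2 / s ^ 4 := by
      refine Finset.sum_le_sum fun i _ => ?_
      have : (α i / s ^ 2) ^ 2 * α i ^ 2 = α i ^ 2 / s ^ 4 * α i ^ 2 := by
        rw [div_pow]; ring
      rw [this]
      exact mul_le_of_le_one_right (by positivity) (pow_le_one₀ (hα i) (hα1 i))
    rw [← Finset.sum_div, ← hS] at h1
    refine h1.trans (le_of_eq ?_)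
    field_simp
  have hA' : ∫ y, (quad (fun i => α i / s ^ 2) y - 1) ^ 2 ∂(gaussPi d α)
      ≤ 1 / (64 * (1 + M4)) := by
    refine hA.trans ?_
    calc M4 * ∑ i, (α i / s ^ 2) ^ 2 * α i ^ 2 ≤ (1 + M4) * (1 / (64 * (1 + M4) ^ 2)) := by
          refine mul_le_mul (by linarith) (hR.trans ?_)
            (Finset.sum_nonneg fun i _ => by positivity) (by linarith)
          exact one_div_le_one_div_of_le (by positivity) hs64
      _ = 1 / (64 * (1 + M4)) := by field_simp
  have f1 : ε / (2 * T) * ∫ y, quad (fun i => α i ^ 2) y ^ 2 ∂(gaussPi d α) ≤ T / 4 := by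
    refine (mul_le_mul_of_nonneg_left hBB (by positivity)).trans (le_of_eq ?_)
    rw [hε]; field_simp; norm_num
  have f2 : 8 / ε * T * ∫ y, (quad (fun i => α i / s ^ 2) y - 1) ^ 2 ∂(gaussPi d α) ≤ T / 4 := by
    refine (mul_le_mul_of_nonneg_left hA' (by positivity)).trans (le_of_eq ?_)
    rw [hε]; field_simp; norm_num
  linarith

lemma triple_lower {d : ℕ} {p : ℝ} (hp0 : 0 ≤ p) (hp1 : p ≤ 1) (t : ℝ) (α : Fin d → ℝ)
    (hα : ∀ i, 0 ≤ α i) (hα1 : ∀ i, α i ≤ 1) (h : IsThreshold d α p t) (s K : ℝ) (hs : 0 < s)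
    (hS : s ^ 2 = ∑ i, α i ^ 2) (hK : 1 ≤ K) (hK1 : 1 ≤ p * K ^ 2) (hK2 : 1 ≤ (1 - p) * K ^ 2)
    (T : ℝ) (hT : T = ∑ i, α i ^ 3) (hT0 : 0 < T) (hs64 : 64 * (1 + M4) ^ 2 ≤ s ^ 2)
    (D C : ℝ) (hD : D = ph K ^ 2 * ph (2 * K) / 4)
    (hC : C = 100 * K ^ 2 * (2 * M4 + 1 + 16 * K ^ 2 * M4)) (hsC : 2 * C / D ≤ s) :
    D / 2 * (T / s ^ 3)
    ≤ ∫ q, fK p t q.1 q.2 * (∫ x, fK p t x q.1 * fK p t x q.2 ∂(gaussPi d α))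
        ∂((gaussPi d α).prod (gaussPi d α)) := by
  have hM := M4_nonneg
  have hv := thresh_bound hp0 hp1 t α hα h s K hs hS hK hK1 hK2
  have hp2 := ph_pos (2 * K)
  have hpK := ph_pos K
  have hD0 : 0 < D := by rw [hD]; positivity
  have hC0 : 0 ≤ C := by rw [hC]; positivity
  have h1 := main_int hp0 hp1 t α hα hα1 s K hs hS hK hv T hT hT0 hs64
  have h2 := err_bound hp0 hp1 t α hα h s K hs hS hK hv _ rfl
  rw [← hC] at h2
  refine le_trans ?_ h2
  have hR : ∑ i, (α i / s ^ 2) ^ 2 * α i ^ 2 ≤ T / s ^ 4 := by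
    rw [hT, Finset.sum_div]
    refine Finset.sum_le_sum fun i _ => ?_
    have : (α i / s ^ 2) ^ 2 * α i ^ 2 = α i ^ 3 / s ^ 4 * α i := by
      rw [div_pow]; ring
    rw [this]
    exact mul_le_of_le_one_right (by have := hα i; positivity) (hα1 i)
  have h3 : ph K ^ 2 * (ph (2 * K) / (2 * s ^ 3) * (T / 2)) ≤ ph (t / s) ^ 2 *
      (∫ q, fK p t q.1 q.2 * bil (fun i => α i / s ^ 2) q.1 q.2
        ∂((gaussPi d α).prod (gaussPi d α))) :=
    mul_le_mul (pow_le_pow_left₀ hpK.le (ph_mono hv) 2) h1 (by positivity) (by positivity)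
  have h4 : ph K ^ 2 * (ph (2 * K) / (2 * s ^ 3) * (T / 2)) = D * (T / s ^ 3) := by
    rw [hD]; field_simp; norm_num
  have h5 := mul_le_mul_of_nonneg_left hR hC0
  have h6 : C * (T / s ^ 4) ≤ D / 2 * (T / s ^ 3) := by
    have e : C * (T / s ^ 4) = C / s * (T / s ^ 3) := by field_simp
    rw [e]
    refine mul_le_mul_of_nonneg_right ?_ (by positivity)
    rw [div_le_iff₀ hs]
    rw [div_le_iff₀ hD0] at hsC
    linarith
  linarith

instance sample_prob (n d : ℕ) (α : Fin d → ℝ) : IsProbabilityMeasure (sampleMeasure n d α) := by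
  unfold sampleMeasure; infer_instance

lemma triple_map {n d : ℕ} (α : Fin d → ℝ) (i j k : Fin n) (hij : i ≠ j) (hik : i ≠ k)
    (hjk : j ≠ k) :
    Measure.map (fun X : Fin n → Fin d → ℝ => ((X j, X k), X i)) (sampleMeasure n d α)
      = ((gaussPi d α).prod (gaussPi d α)).prod (gaussPi d α) := by
  have hind : iIndepFun (fun (i : Fin n) (X : Fin n → Fin d → ℝ) => X i) (sampleMeasure n d α) :=
    iIndepFun_pi (X := fun _ x => x) (fun _ => measurable_id.aemeasurable)
  have hm : ∀ i : Fin n, Measurable (fun X : Fin n → Fin d → ℝ => X i) :=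
    fun i => measurable_pi_apply i
  have he : ∀ i : Fin n, Measure.map (fun X : Fin n → Fin d → ℝ => X i) (sampleMeasure n d α)
      = gaussPi d α := fun i => (measurePreserving_eval (fun _ : Fin n => gaussPi d α) i).map_eq
  have h1 := hind.indepFun_prodMk hm j k i hij.symm hik.symm
  have h2 := hind.indepFun hjk
  rw [indepFun_iff_map_prod_eq_prod_map_map ((hm j).prodMk (hm k)).aemeasurable
    (hm i).aemeasurable] at h1
  rw [indepFun_iff_map_prod_eq_prod_map_map (hm j).aemeasurable (hm k).aemeasurable] at h2
  rw [h1, h2, he, he, he]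

lemma triple_int {n d : ℕ} {p : ℝ} (hp0 : 0 ≤ p) (hp1 : p ≤ 1) (t : ℝ) (α : Fin d → ℝ)
    (i j k : Fin n) (hij : i ≠ j) (hik : i ≠ k) (hjk : j ≠ k) :
    ∫ X, (edgeInd t X i j - p) * (edgeInd t X i k - p) * (edgeInd t X j k - p)
        ∂(sampleMeasure n d α)
      = ∫ q, fK p t q.1 q.2 * (∫ x, fK p t x q.1 * fK p t x q.2 ∂(gaussPi d α))
        ∂((gaussPi d α).prod (gaussPi d α)) := by
  set F : ((Fin d → ℝ) × (Fin d → ℝ)) × (Fin d → ℝ) → ℝ :=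
    fun r => fK p t r.1.1 r.1.2 * (fK p t r.2 r.1.1 * fK p t r.2 r.1.2) with hF
  have hFm : Measurable F :=
    (fK_meas p t _ _ measurable_fst.fst measurable_fst.snd).mul
      ((fK_meas p t _ _ measurable_snd measurable_fst.fst).mul
        (fK_meas p t _ _ measurable_snd measurable_fst.snd))
  have hFi : Integrable F (((gaussPi d α).prod (gaussPi d α)).prod (gaussPi d α)) := by
    refine Integrable.of_bound (C := 1) hFm.aestronglyMeasurable (ae_of_all _ fun r => ?_)
    rw [hF, norm_mul, norm_mul]
    exact mul_le_one₀ (fK_bd hp0 hp1 t _ _) (by positivity)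
      (mul_le_one₀ (fK_bd hp0 hp1 t _ _) (norm_nonneg _) (fK_bd hp0 hp1 t _ _))
  have e : ∀ X : Fin n → Fin d → ℝ,
      (edgeInd t X i j - p) * (edgeInd t X i k - p) * (edgeInd t X j k - p)
        = F ((X j, X k), X i) := by
    intro X; simp only [hF, fK, edgeInd]; ring
  simp_rw [e]
  rw [← integral_map (φ := fun X : Fin n → Fin d → ℝ => ((X j, X k), X i)) (f := F)
    (((measurable_pi_apply j).prodMk (measurable_pi_apply k)).prodMk
      (measurable_pi_apply i)).aemeasurable hFm.aestronglyMeasurable,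
    triple_map α i j k hij hik hjk, integral_prod _ hFi]
  simp_rw [hF, integral_const_mul]

lemma triple_integrable {n d : ℕ} {p : ℝ} (hp0 : 0 ≤ p) (hp1 : p ≤ 1) (t : ℝ) (α : Fin d → ℝ)
    (i j k : Fin n) :
    Integrable (fun X => (edgeInd t X i j - p) * (edgeInd t X i k - p) * (edgeInd t X j k - p))
      (sampleMeasure n d α) := by
  have hm : ∀ a b : Fin n, Measurable (fun X : Fin n → Fin d → ℝ => edgeInd t X a b - p) :=
    fun a b => fK_meas p t _ _ (measurable_pi_apply a) (measurable_pi_apply b)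
  have hb : ∀ (a b : Fin n) (X : Fin n → Fin d → ℝ), ‖edgeInd t X a b - p‖ ≤ 1 :=
    fun a b X => fK_bd hp0 hp1 t (X a) (X b)
  refine Integrable.of_bound (C := 1) (((hm i j).mul (hm i k)).mul (hm j k)).aestronglyMeasurable
    (ae_of_all _ fun X => ?_)
  rw [norm_mul, norm_mul]
  exact mul_le_one₀ (mul_le_one₀ (hb i j X) (norm_nonneg _) (hb i k X)) (norm_nonneg _) (hb j k X)

lemma count_triples (n : ℕ) (hn : 3 ≤ n) (E : ℝ) :
    (1 / 6) * ∑ i : Fin n, ∑ j : Fin n, ∑ k : Fin n,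
      (if i ≠ j ∧ i ≠ k ∧ j ≠ k then E else 0) = (n.choose 3 : ℝ) * E := by
  have e : ∀ i j k : Fin n, (if i ≠ j ∧ i ≠ k ∧ j ≠ k then E else 0)
      = (if i = j then 0 else (E - (if i = k then E else 0) - (if j = k then E else 0))) := by
    intro i j k
    by_cases h1 : i = j <;> by_cases h2 : i = k <;> by_cases h3 : j = k <;> simp_all
  have e1 : ∀ i j : Fin n, ∑ k : Fin n, (if i ≠ j ∧ i ≠ k ∧ j ≠ k then E else 0)
      = (n - 2) * E - (if i = j then (n - 2) * E else 0) := by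
    intro i j
    simp_rw [e]
    split_ifs with h
    · simp
    · simp [Finset.sum_sub_distrib]; ring
  simp_rw [e1]
  simp only [Finset.sum_sub_distrib, Finset.sum_const, Finset.sum_ite_eq, Finset.mem_univ, if_true,
    Finset.card_univ, Fintype.card_fin, nsmul_eq_mul]
  have hc : (n.descFactorial 3 : ℝ) = 6 * (n.choose 3 : ℝ) := by
    rw [Nat.descFactorial_eq_factorial_mul_choose]; push_cast; norm_num [Nat.factorial]
  obtain ⟨m, rfl⟩ := Nat.exists_eq_add_of_le' hn
  have hd : ((m + 3).descFactorial 3 : ℝ) = (m + 3) * (m + 2) * (m + 1) := by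
    have : (m + 3).descFactorial 3 = (m + 3) * (m + 2) * (m + 1) := by
      simp [Nat.descFactorial_succ]; ring
    rw [this]; push_cast; ring
  rw [hd] at hc
  have hc' : ((m + 3).choose 3 : ℝ) = (m + 3) * (m + 2) * (m + 1) / 6 := by linarith
  rw [hc']; push_cast; ring

lemma tau_int {n d : ℕ} (hn : 3 ≤ n) {p : ℝ} (hp0 : 0 ≤ p) (hp1 : p ≤ 1) (t : ℝ) (α : Fin d → ℝ) :
    ∫ X, tauCount p t X ∂(sampleMeasure n d α)
      = (n.choose 3 : ℝ) * ∫ q, fK p t q.1 q.2 * (∫ x, fK p t x q.1 * fK p t x q.2 ∂(gaussPi d α))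
        ∂((gaussPi d α).prod (gaussPi d α)) := by
  have hI : ∀ i j k : Fin n, Integrable (fun X : Fin n → Fin d → ℝ =>
      if i ≠ j ∧ i ≠ k ∧ j ≠ k then
        (edgeInd t X i j - p) * (edgeInd t X i k - p) * (edgeInd t X j k - p) else 0)
      (sampleMeasure n d α) := by
    intro i j k
    split_ifs
    · exact triple_integrable hp0 hp1 t α i j k
    · exact integrable_zero _ _ _
  rw [← count_triples n hn]
  unfold tauCount
  rw [integral_const_mul, integral_finsetSum _ fun i _ => integrable_finsetSum _ fun j _ =>
    integrable_finsetSum _ fun k _ => hI i j k]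
  congr 1
  refine Finset.sum_congr rfl fun i _ => ?_
  rw [integral_finsetSum _ fun j _ => integrable_finsetSum _ fun k _ => hI i j k]
  refine Finset.sum_congr rfl fun j _ => ?_
  rw [integral_finsetSum _ fun k _ => hI i j k]
  refine Finset.sum_congr rfl fun k _ => ?_
  split_ifs with h
  · exact triple_int hp0 hp1 t α i j k h.1 h.2.1 h.2.2
  · simp

lemma nrm_pow {d : ℕ} (α : Fin d → ℝ) (hα : ∀ i, 0 ≤ α i) (q : ℕ) (hq : q ≠ 0) :
    nrm q α ^ q = ∑ i, α i ^ q := by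
  unfold nrm
  rw [one_div, Real.rpow_inv_natCast_pow (Finset.sum_nonneg fun i _ => pow_nonneg (hα i) q) hq]

/-- There are `δ_p, c_p > 0` depending only on `p` such that for
`n ≥ 3` and `‖α‖₂² > c_p`, `E[τ(G(n,p,α))] ≥ δ_p · C(n,3) · (‖α‖₃/‖α‖₂)³`. -/
theorem tau_expectation_lower_bound (p : ℝ) (hp : p ∈ Set.Ioo (0 : ℝ) 1) :
    ∃ δ > (0 : ℝ), ∃ c > (0 : ℝ), ∀ (n : ℕ), 3 ≤ n → ∀ (d : ℕ) (α : Fin d → ℝ),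
      (∀ i, α i ∈ Set.Icc (0 : ℝ) 1) → (∃ i, α i = 1) →
      nrm 2 α ^ 2 > c →
      ∀ t : ℝ, IsThreshold d α p t →
        δ * (n.choose 3 : ℝ) * (nrm 3 α / nrm 2 α) ^ 3
          ≤ ∫ X, tauCount p t X ∂(sampleMeasure n d α) := by
  obtain ⟨hp0, hp1⟩ := hp
  have hM := M4_nonneg
  have h1p : 0 < 1 - p := by linarith
  set K : ℝ := 1 / p * (1 / (1 - p)) with hKd
  have hA : 1 ≤ 1 / p := one_le_one_div hp0 hp1.le
  have hB : 1 ≤ 1 / (1 - p) := one_le_one_div h1p (by linarith)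
  have hK : 1 ≤ K := one_le_mul_of_one_le_of_one_le hA hB
  have hK1 : 1 ≤ p * K ^ 2 := by
    have : p * K ^ 2 = 1 / (1 - p) * K := by rw [hKd]; field_simp
    rw [this]; exact one_le_mul_of_one_le_of_one_le hB hK
  have hK2 : 1 ≤ (1 - p) * K ^ 2 := by
    have : (1 - p) * K ^ 2 = 1 / p * K := by rw [hKd]; field_simp
    rw [this]; exact one_le_mul_of_one_le_of_one_le hA hK
  have hp2 := ph_pos (2 * K)
  have hpK := ph_pos K
  obtain ⟨D, hD⟩ : ∃ D, D = ph K ^ 2 * ph (2 * K) / 4 := ⟨_, rfl⟩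
  obtain ⟨C, hC⟩ : ∃ C, C = 100 * K ^ 2 * (2 * M4 + 1 + 16 * K ^ 2 * M4) := ⟨_, rfl⟩
  have hD0 : 0 < D := by rw [hD]; positivity
  have hC0 : 0 ≤ C := by rw [hC]; positivity
  refine ⟨D / 2, by positivity, 64 * (1 + M4) ^ 2 + (2 * C / D) ^ 2, by positivity, ?_⟩
  intro n hn d α hα01 hex hc t ht
  have hα : ∀ i, 0 ≤ α i := fun i => (hα01 i).1
  have hs0 : 0 ≤ nrm 2 α :=
    Real.rpow_nonneg (Finset.sum_nonneg fun i _ => pow_nonneg (hα i) 2) _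
  have hs : 0 < nrm 2 α := by
    rcases hs0.eq_or_lt with h | h
    · rw [← h] at hc
      have : 0 < 64 * (1 + M4) ^ 2 + (2 * C / D) ^ 2 := by positivity
      norm_num at hc
      linarith
    · exact h
  have hT0 : 0 < ∑ i, α i ^ 3 := by
    obtain ⟨i, hi⟩ := hex
    refine Finset.sum_pos' (fun i _ => pow_nonneg (hα i) 3) ⟨i, Finset.mem_univ i, ?_⟩
    rw [hi]; norm_num
  have hS := nrm_pow α hα 2 (by norm_num)
  have hsC : 2 * C / D ≤ nrm 2 α := by
    refine le_of_sq_le_sq ?_ hs0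
    have : 0 ≤ 64 * (1 + M4) ^ 2 := by positivity
    linarith
  have h64 : 64 * (1 + M4) ^ 2 ≤ nrm 2 α ^ 2 := by
    have : 0 ≤ (2 * C / D) ^ 2 := by positivity
    linarith
  have key := triple_lower hp0.le hp1.le t α hα (fun i => (hα01 i).2) ht (nrm 2 α) K hs hS hK hK1
    hK2 _ rfl hT0 h64 D C hD hC hsC
  rw [tau_int hn hp0.le hp1.le t α, div_pow, nrm_pow α hα 3 (by norm_num)]
  have := mul_le_mul_of_nonneg_left key (Nat.cast_nonneg (α := ℝ) (n.choose 3))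
  refine le_trans (le_of_eq ?_) this
  ring

end
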